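/- arXiv:2011.12324 — 3 statements merged into one kernel-verified Lean document; each statement's English description precedes it below -/
import Mathlib

section
/- Adopt the iterated trimming setup with F_• and each G_•^i length-3 DG-algebras, and assume the complexes F_• and all G_•^i are minimal (their differentials tensored with k vanish). Equip T_• with the DG-algebra structure of the main theorem and let T̄_• = T_• ⊗_R k with the induced k-algebra structure. Then the only possibly nontrivial products in the graded k-algebra T̄_• are those of the forms F̄_1' · F̄_1', F̄_1' · F̄_2, F̄_1' · Ḡ_1^i, Ḡ_1^i · F̄_2, and F̄_1' · Ḡ_2^i (1 ≤ i ≤ t); all products involving two factors from the summands Ḡ_•^i, and all other products, vanish. -/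
open IsLocalRing

/-!
STATEMENT 4 (Corollary 3.4, first part): assume in the length-3 iterated trimming setup
that the complexes `F_•` and `G^i_•` are all minimal (differentials land in `𝔪` times
the target).  Equip the trimming complex `T` with the DG-algebra structure of
Theorem 3.2 (axioms + formulas (1)–(9)).  Then, in `T̄ = T ⊗ k` (where products vanish
iff they land in `𝔪 • T`), the only possibly nontrivial products are
`F̄₁'·F̄₁'`, `F̄₁'·F̄₂`, `F̄₁'·Ḡ₁ⁱ`, `Ḡ₁ⁱ·F̄₂` and `F̄₁'·Ḡ₂ⁱ`: all products with both
factors from the `Ḡ`-summands vanish (all other products vanish for degree reasons).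
-/
universe u

section TrimmingSetup

variable {R : Type u} [CommRing R] {t : ℕ}
variable {F1' F2 F3 : Type u}
variable [AddCommGroup F1'] [Module R F1'] [AddCommGroup F2] [Module R F2]
variable [AddCommGroup F3] [Module R F3]
variable {G1 G2 G3 : Fin t → Type u}
variable [∀ i, AddCommGroup (G1 i)] [∀ i, Module R (G1 i)]
variable [∀ i, AddCommGroup (G2 i)] [∀ i, Module R (G2 i)]
variable [∀ i, AddCommGroup (G3 i)] [∀ i, Module R (G3 i)]

/-- The differential `ℓ₁` of the trimming complex (Remark 2.9). -/
def Tl1 (d1 : (F1' × (Fin t → R)) →ₗ[R] R) (m1 : ∀ i, G1 i →ₗ[R] R) :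
    (F1' × (∀ i, G1 i)) → R :=
  fun z => d1 (z.1, 0) - ∑ i, m1 i (z.2 i) * d1 (0, Pi.single i 1)

/-- The differential `ℓ₂` of the trimming complex (Remark 2.9). -/
def Tl2 (d2 : F2 →ₗ[R] (F1' × (Fin t → R))) (q1 : ∀ i, F2 →ₗ[R] G1 i)
    (m2 : ∀ i, G2 i →ₗ[R] G1 i) :
    (F2 × (∀ i, G2 i)) → (F1' × (∀ i, G1 i)) :=
  fun w => ((d2 w.1).1, fun i => - q1 i w.1 + m2 i (w.2 i))

/-- The differential `ℓ₃` of the trimming complex (Remark 2.9). -/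
def Tl3 (d3 : F3 →ₗ[R] F2) (q2 : ∀ i, F3 →ₗ[R] G2 i)
    (m3 : ∀ i, G3 i →ₗ[R] G2 i) :
    (F3 × (∀ i, G3 i)) → (F2 × (∀ i, G2 i)) :=
  fun u => (d3 u.1, fun i => q2 i u.1 + m3 i (u.2 i))

/-- The axioms for an associative DG-algebra structure `(t11, t12)` on the length-3
trimming complex `T` (Leibniz rule, graded commutativity, vanishing odd squares,
associativity). -/
def TrimDGAxioms (d1 : (F1' × (Fin t → R)) →ₗ[R] R)
    (d2 : F2 →ₗ[R] (F1' × (Fin t → R))) (d3 : F3 →ₗ[R] F2)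
    (m1 : ∀ i, G1 i →ₗ[R] R) (m2 : ∀ i, G2 i →ₗ[R] G1 i) (m3 : ∀ i, G3 i →ₗ[R] G2 i)
    (q1 : ∀ i, F2 →ₗ[R] G1 i) (q2 : ∀ i, F3 →ₗ[R] G2 i)
    (t11 : (F1' × (∀ i, G1 i)) →ₗ[R] (F1' × (∀ i, G1 i)) →ₗ[R] (F2 × (∀ i, G2 i)))
    (t12 : (F1' × (∀ i, G1 i)) →ₗ[R] (F2 × (∀ i, G2 i)) →ₗ[R] (F3 × (∀ i, G3 i))) :
    Prop :=
  (∀ z z', Tl2 d2 q1 m2 (t11 z z') = Tl1 d1 m1 z • z' - Tl1 d1 m1 z' • z) ∧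
  (∀ z, t11 z z = 0) ∧
  (∀ z z', t11 z z' = - t11 z' z) ∧
  (∀ z w, Tl3 d3 q2 m3 (t12 z w) = Tl1 d1 m1 z • w - t11 z (Tl2 d2 q1 m2 w)) ∧
  (∀ z z' z'', t12 z'' (t11 z z') = t12 z (t11 z' z''))

/-- The formulas (1)–(9) of Theorem 3.2 for the product on the trimming complex. -/
def TrimDGFormulas [DecidableEq (Fin t)]
    (d1 : (F1' × (Fin t → R)) →ₗ[R] R) (d3 : F3 →ₗ[R] F2)
    (m1 : ∀ i, G1 i →ₗ[R] R) (m2 : ∀ i, G2 i →ₗ[R] G1 i) (m3 : ∀ i, G3 i →ₗ[R] G2 i)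
    (q1 : ∀ i, F2 →ₗ[R] G1 i) (q2 : ∀ i, F3 →ₗ[R] G2 i)
    (μ11 : (F1' × (Fin t → R)) →ₗ[R] (F1' × (Fin t → R)) →ₗ[R] F2)
    (μ12 : (F1' × (Fin t → R)) →ₗ[R] F2 →ₗ[R] F3)
    (γ11 : ∀ i, G1 i →ₗ[R] G1 i →ₗ[R] G2 i)
    (γ12 : ∀ i, G1 i →ₗ[R] G2 i →ₗ[R] G3 i)
    (t11 : (F1' × (∀ i, G1 i)) →ₗ[R] (F1' × (∀ i, G1 i)) →ₗ[R] (F2 × (∀ i, G2 i)))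
    (t12 : (F1' × (∀ i, G1 i)) →ₗ[R] (F2 × (∀ i, G2 i)) →ₗ[R] (F3 × (∀ i, G3 i))) :
    Prop :=
  -- (1)  F₁' ⊗ F₁' → F₂ ⊕ (⊕ᵢ G₂ⁱ)
  (∀ f f' : F1', ∃ g2 : ∀ i, G2 i,
    (∀ i, m2 i (g2 i) = q1 i (μ11 (f, 0) (f', 0))) ∧
    t11 (f, 0) (f', 0) = (μ11 (f, 0) (f', 0), g2)) ∧
  -- (2)  F₁' ⊗ G₁ⁱ → F₂ ⊕ (⊕ⱼ G₂ʲ)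
  (∀ (f : F1') (i : Fin t) (g : G1 i), ∃ g2 : ∀ j, G2 j,
    (∀ j, m2 j (g2 j) =
      m1 i g • q1 j (μ11 (0, Pi.single i 1) (f, 0)) + Pi.single i (d1 (f, 0) • g) j) ∧
    t11 (f, 0) (0, Pi.single i g) = (m1 i g • μ11 (0, Pi.single i 1) (f, 0), g2)) ∧
  -- (3)  G₁ⁱ ⊗ G₁ⁱ → F₂ ⊕ (⊕ⱼ G₂ʲ)
  (∀ (i : Fin t) (g g' : G1 i),
    t11 (0, Pi.single i g) (0, Pi.single i g') =
      (0, Pi.single i (-(d1 (0, Pi.single i 1) • γ11 i g g')))) ∧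
  -- (4)  G₁ⁱ ⊗ G₁ʲ → F₂ ⊕ (⊕ₖ G₂ᵏ), i < j
  (∀ (i j : Fin t), i < j → ∀ (g : G1 i) (g' : G1 j), ∃ g2 : ∀ k, G2 k,
    (∀ k, m2 k (g2 k) =
      (m1 i g * m1 j g') • q1 k (μ11 (0, Pi.single i 1) (0, Pi.single j 1)) +
      Pi.single i ((m1 j g' * d1 (0, Pi.single j 1)) • g) k -
      Pi.single j ((m1 i g * d1 (0, Pi.single i 1)) • g') k) ∧
    t11 (0, Pi.single i g) (0, Pi.single j g') =
      ((m1 i g * m1 j g') • μ11 (0, Pi.single i 1) (0, Pi.single j 1), g2)) ∧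
  -- (5)  F₁' ⊗ F₂ → F₃ ⊕ (⊕ᵢ G₃ⁱ)
  (∀ (f : F1') (w : F2), ∃ g3 : ∀ i, G3 i,
    t12 (f, 0) (w, 0) = (μ12 (f, 0) w, g3)) ∧
  -- (6)  F₁' ⊗ G₂ⁱ → F₃ ⊕ (⊕ⱼ G₃ʲ)
  (∀ (f : F1') (i : Fin t) (c : G2 i), ∃ g3 : ∀ j, G3 j,
    t12 (f, 0) (0, Pi.single i c) = (0, g3)) ∧
  -- (7)  G₁ⁱ ⊗ G₂ⁱ → F₃ ⊕ (⊕ⱼ G₃ʲ)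
  (∀ (i : Fin t) (g : G1 i) (c : G2 i),
    t12 (0, Pi.single i g) (0, Pi.single i c) =
      (0, Pi.single i (-(d1 (0, Pi.single i 1) • γ12 i g c)))) ∧
  -- (8)  G₁ⁱ ⊗ G₂ʲ → F₃ ⊕ (⊕ₖ G₃ᵏ), i ≠ j
  (∀ (i j : Fin t), i ≠ j → ∀ (g : G1 i) (c : G2 j), ∃ g3 : ∀ k, G3 k,
    t12 (0, Pi.single i g) (0, Pi.single j c) = (0, g3)) ∧
  -- (9)  G₁ⁱ ⊗ F₂ → F₃ ⊕ (⊕ⱼ G₃ʲ)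
  (∀ (i : Fin t) (g : G1 i) (w : F2), ∃ g3 : ∀ j, G3 j,
    t12 (0, Pi.single i g) (w, 0) = (-(m1 i g) • μ12 (0, Pi.single i 1) w, g3))

end TrimmingSetup

/-- An alternating bilinear map on a finite free module whose values lie in the range of `p`
lifts along `p` to an alternating bilinear map. -/
theorem exists_alternating_lift {R M N P : Type*} [CommRing R] [Nontrivial R]
    [AddCommGroup M] [Module R M] [Module.Free R M] [Module.Finite R M]
    [AddCommGroup N] [Module R N] [AddCommGroup P] [Module R P]
    (p : P →ₗ[R] N) (A : M →ₗ[R] M →ₗ[R] N) (hA : ∀ a, A a a = 0)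
    (hr : ∀ a b, ∃ c, p c = A a b) :
    ∃ B : M →ₗ[R] M →ₗ[R] P, (∀ a, B a a = 0) ∧ ∀ a b, p (B a b) = A a b := by
  classical
  choose h hh using hr
  let b := Module.finBasis R M
  have hskew : ∀ a c, A a c = - A c a := by
    intro a c
    have h1 := hA (a + c)
    simp only [map_add, LinearMap.add_apply, hA, zero_add, add_zero] at h1
    exact eq_neg_of_add_eq_zero_right h1
  let B : M →ₗ[R] M →ₗ[R] P := LinearMap.mk₂ R
    (fun a c => ∑ i, ∑ j, if i < j then
      (b.repr a i * b.repr c j - b.repr a j * b.repr c i) • h (b i) (b j) else 0)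
    (by
      intro x y z
      simp only [← Finset.sum_add_distrib]
      refine Finset.sum_congr rfl fun i _ => Finset.sum_congr rfl fun j _ => ?_
      split_ifs
      · simp only [map_add, Finsupp.add_apply]; module
      · simp)
    (by
      intro r x z
      simp only [Finset.smul_sum]
      refine Finset.sum_congr rfl fun i _ => Finset.sum_congr rfl fun j _ => ?_
      split_ifs
      · simp only [map_smul, Finsupp.smul_apply, smul_eq_mul]; module
      · simp)
    (by
      intro x y z
      simp only [← Finset.sum_add_distrib]
      refine Finset.sum_congr rfl fun i _ => Finset.sum_congr rfl fun j _ => ?_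
      split_ifs
      · simp only [map_add, Finsupp.add_apply]; module
      · simp)
    (by
      intro r x z
      simp only [Finset.smul_sum]
      refine Finset.sum_congr rfl fun i _ => Finset.sum_congr rfl fun j _ => ?_
      split_ifs
      · simp only [map_smul, Finsupp.smul_apply, smul_eq_mul]; module
      · simp)
  have hBdef : ∀ a c, B a c = ∑ i, ∑ j, if i < j then
      (b.repr a i * b.repr c j - b.repr a j * b.repr c i) • h (b i) (b j) else 0 :=
    fun a c => rfl
  have hBalt : ∀ a, B a a = 0 := by
    intro a
    rw [hBdef]
    refine Finset.sum_eq_zero fun i _ => Finset.sum_eq_zero fun j _ => ?_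
    split_ifs
    · rw [mul_comm, sub_self, zero_smul]
    · rfl
  have hBskew : ∀ a c, B a c = - B c a := by
    intro a c
    have h1 := hBalt (a + c)
    simp only [map_add, LinearMap.add_apply, hBalt, zero_add, add_zero] at h1
    exact eq_neg_of_add_eq_zero_right h1
  have hlt : ∀ k l, k < l → B (b k) (b l) = h (b k) (b l) := by
    intro k l hkl
    rw [hBdef, Finset.sum_eq_single k, Finset.sum_eq_single l]
    · simp [hkl, Finsupp.single_apply, hkl.ne, hkl.ne']
    · intro j _ hj
      split_ifs with hkj
      · simp [Finsupp.single_apply, hj.symm, hkj.ne]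
      · rfl
    · simp
    · intro i _ hi
      refine Finset.sum_eq_zero fun j _ => ?_
      split_ifs with hij
      · by_cases hkj : k = j
        · subst hkj
          have : l ≠ i := (hij.trans hkl).ne'
          simp [Finsupp.single_apply, hi.symm, this]
        · simp [Finsupp.single_apply, hi.symm, hkj]
      · rfl
    · simp
  refine ⟨B, hBalt, ?_⟩
  have key : B.compr₂ p = A := by
    refine b.ext fun k => b.ext fun l => ?_
    rw [LinearMap.compr₂_apply]
    rcases lt_trichotomy k l with hkl | hkl | hkl
    · rw [hlt k l hkl, hh]
    · rw [hkl, hBalt, hA, map_zero]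
    · rw [hBskew, map_neg, hlt l k hkl, hh, ← hskew]
  intro a c
  rw [← key, LinearMap.compr₂_apply]

/-- Membership in `J • ⊤` is preserved by linear maps. -/
theorem map_mem_smul_top' {R M N : Type*} [CommRing R] [AddCommGroup M] [Module R M]
    [AddCommGroup N] [Module R N] (J : Ideal R) (f : M →ₗ[R] N) {a : M}
    (ha : a ∈ J • (⊤ : Submodule R M)) : f a ∈ J • (⊤ : Submodule R N) := by
  have : f a ∈ (J • (⊤ : Submodule R M)).map f := Submodule.mem_map_of_mem ha
  rw [Submodule.map_smul''] at this
  exact Submodule.smul_mono le_rfl le_top this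

/-- Componentwise criterion for membership in `J • ⊤` of a product. -/
theorem prod_pi_mem_smul_top {R M : Type*} [CommRing R] [AddCommGroup M] [Module R M]
    {t : ℕ} {G : Fin t → Type*} [∀ i, AddCommGroup (G i)] [∀ i, Module R (G i)]
    (J : Ideal R) (a : M) (g : ∀ i, G i) (ha : a ∈ J • (⊤ : Submodule R M))
    (hg : ∀ i, g i ∈ J • (⊤ : Submodule R (G i))) :
    (a, g) ∈ J • (⊤ : Submodule R (M × (∀ i, G i))) := by
  classical
  have h1 : (a, g) = LinearMap.inl R M (∀ i, G i) a +
      ∑ i, (LinearMap.inr R M (∀ i, G i) ∘ₗ LinearMap.single R G i) (g i) := by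
    have : ∑ i, (LinearMap.inr R M (∀ i, G i) ∘ₗ LinearMap.single R G i) (g i) =
        LinearMap.inr R M (∀ i, G i) (∑ i, Pi.single i (g i)) := by
      rw [map_sum]; rfl
    rw [this, Finset.univ_sum_single]
    simp
  rw [h1]
  exact add_mem (map_mem_smul_top' J _ ha)
    (sum_mem fun i _ => map_mem_smul_top' J _ (hg i))

theorem trimming_complex_nontrivial_products
    {R : Type u} [CommRing R] [IsNoetherianRing R] [IsLocalRing R]
    -- regular local ring: the maximal ideal is generated by a regular sequence
    (hreg : ∃ xs : List R, RingTheory.Sequence.IsRegular R xs ∧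
      Ideal.span {a | a ∈ xs} = maximalIdeal R)
    (t : ℕ)
    (F1' F2 F3 : Type u)
    [AddCommGroup F1'] [Module R F1'] [Module.Free R F1'] [Module.Finite R F1']
    [AddCommGroup F2] [Module R F2] [Module.Free R F2] [Module.Finite R F2]
    [AddCommGroup F3] [Module R F3] [Module.Free R F3] [Module.Finite R F3]
    (G1 G2 G3 : Fin t → Type u)
    [∀ i, AddCommGroup (G1 i)] [∀ i, Module R (G1 i)]
    [∀ i, Module.Free R (G1 i)] [∀ i, Module.Finite R (G1 i)]
    [∀ i, AddCommGroup (G2 i)] [∀ i, Module R (G2 i)]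
    [∀ i, Module.Free R (G2 i)] [∀ i, Module.Finite R (G2 i)]
    [∀ i, AddCommGroup (G3 i)] [∀ i, Module R (G3 i)]
    [∀ i, Module.Free R (G3 i)] [∀ i, Module.Finite R (G3 i)]
    (I : Ideal R) (𝔞 : Fin t → Ideal R)
    (d1 : (F1' × (Fin t → R)) →ₗ[R] R)
    (d2 : F2 →ₗ[R] (F1' × (Fin t → R)))
    (d3 : F3 →ₗ[R] F2)
    -- `F` is a free resolution of `R/I`
    (hFres0 : LinearMap.range d1 = I)
    (hFres1 : LinearMap.ker d1 = LinearMap.range d2)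
    (hFres2 : LinearMap.ker d2 = LinearMap.range d3)
    (hFres3 : LinearMap.ker d3 = ⊥)
    -- `d₀ⁱ(F₂) ⊆ 𝔞 i e₀ⁱ`
    (ha : ∀ (i : Fin t) (v : F2), (d2 v).2 i ∈ 𝔞 i)
    (m1 : ∀ i, G1 i →ₗ[R] R) (m2 : ∀ i, G2 i →ₗ[R] G1 i) (m3 : ∀ i, G3 i →ₗ[R] G2 i)
    -- `G^i` is a free resolution of `R/𝔞 i`
    (hGres0 : ∀ i, LinearMap.range (m1 i) = 𝔞 i)
    (hGres1 : ∀ i, LinearMap.ker (m1 i) = LinearMap.range (m2 i))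
    (hGres2 : ∀ i, LinearMap.ker (m2 i) = LinearMap.range (m3 i))
    (hGres3 : ∀ i, LinearMap.ker (m3 i) = ⊥)
    -- the comparison maps of the trimming complex
    (q1 : ∀ i, F2 →ₗ[R] G1 i) (q2 : ∀ i, F3 →ₗ[R] G2 i)
    (hq1 : ∀ i v, m1 i (q1 i v) = (d2 v).2 i)
    (hq2 : ∀ i w, m2 i (q2 i w) = q1 i (d3 w))
    -- DG-algebra structure on `F`
    (μ11 : (F1' × (Fin t → R)) →ₗ[R] (F1' × (Fin t → R)) →ₗ[R] F2)
    (μ12 : (F1' × (Fin t → R)) →ₗ[R] F2 →ₗ[R] F3)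
    (hFleib1 : ∀ a b, d2 (μ11 a b) = d1 a • b - d1 b • a)
    (hFalt : ∀ a, μ11 a a = 0)
    (hFskew : ∀ a b, μ11 a b = - μ11 b a)
    (hFleib2 : ∀ a z, d3 (μ12 a z) = d1 a • z - μ11 a (d2 z))
    (hFassoc : ∀ a b c, μ12 c (μ11 a b) = μ12 a (μ11 b c))
    -- DG-algebra structures on the `G^i`
    (γ11 : ∀ i, G1 i →ₗ[R] G1 i →ₗ[R] G2 i)
    (γ12 : ∀ i, G1 i →ₗ[R] G2 i →ₗ[R] G3 i)
    (hGleib1 : ∀ i a b, m2 i (γ11 i a b) = m1 i a • b - m1 i b • a)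
    (hGalt : ∀ i a, γ11 i a a = 0)
    (hGskew : ∀ i a b, γ11 i a b = - γ11 i b a)
    (hGleib2 : ∀ i a c, m3 i (γ12 i a c) = m1 i a • c - γ11 i a (m2 i c))
    (hGassoc : ∀ i a b c, γ12 i c (γ11 i a b) = γ12 i a (γ11 i b c))
    -- minimality of `F` and the `G^i`
    (hminF1 : ∀ a, d1 a ∈ maximalIdeal R)
    (hminF2 : ∀ v, d2 v ∈ maximalIdeal R • (⊤ : Submodule R (F1' × (Fin t → R))))
    (hminF3 : ∀ w, d3 w ∈ maximalIdeal R • (⊤ : Submodule R F2))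
    (hminG1 : ∀ i g, m1 i g ∈ maximalIdeal R)
    (hminG2 : ∀ i c, m2 i c ∈ maximalIdeal R • (⊤ : Submodule R (G1 i)))
    (hminG3 : ∀ i u, m3 i u ∈ maximalIdeal R • (⊤ : Submodule R (G2 i))) :
    -- conclusion: for the DG-algebra structure of Theorem 3.2, all products in `T̄`
    -- having both factors in the `Ḡ`-summands vanish
    ∃ (t11 : (F1' × (∀ i, G1 i)) →ₗ[R] (F1' × (∀ i, G1 i)) →ₗ[R] (F2 × (∀ i, G2 i)))
      (t12 : (F1' × (∀ i, G1 i)) →ₗ[R] (F2 × (∀ i, G2 i)) →ₗ[R] (F3 × (∀ i, G3 i))),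
      TrimDGAxioms d1 d2 d3 m1 m2 m3 q1 q2 t11 t12 ∧
      TrimDGFormulas d1 d3 m1 m2 m3 q1 q2 μ11 μ12 γ11 γ12 t11 t12 ∧
      (∀ g g' : ∀ i, G1 i,
        t11 (0, g) (0, g') ∈ maximalIdeal R • (⊤ : Submodule R (F2 × (∀ i, G2 i)))) ∧
      (∀ (g : ∀ i, G1 i) (c : ∀ i, G2 i),
        t12 (0, g) (0, c) ∈ maximalIdeal R • (⊤ : Submodule R (F3 × (∀ i, G3 i)))) := by
  classical
  -- the comparison `T₁ → F₁`
  let E : Fin t → F1' × (Fin t → R) := fun i => (0, Pi.single i 1)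
  let φ : (F1' × (∀ i, G1 i)) →ₗ[R] (F1' × (Fin t → R)) :=
    LinearMap.prod (LinearMap.fst R F1' (∀ i, G1 i))
      (LinearMap.pi fun i =>
        -(m1 i ∘ₗ LinearMap.proj i ∘ₗ LinearMap.snd R F1' (∀ i, G1 i)))
  have hφ : ∀ z, φ z = (z.1, fun i => - m1 i (z.2 i)) := fun z => rfl
  let p : Fin t → (F1' × (Fin t → R)) →ₗ[R] (F1' × (Fin t → R)) := fun k =>
    LinearMap.id -
      ((LinearMap.proj k ∘ₗ LinearMap.snd R F1' (Fin t → R)).smulRight (E k))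
  have hp : ∀ k a, p k a = a - a.2 k • E k := fun k a => rfl
  have hEk : ∀ k, (E k).2 k = 1 := fun k => by simp [E]
  have hEj : ∀ k j, j ≠ k → (E k).2 j = 0 := fun k j h => by simp [E, h]
  have hpk : ∀ k a, (p k a).2 k = 0 := by
    intro k a
    rw [hp]
    simp [hEk]
  have hpE : ∀ k, p k (E k) = 0 := by
    intro k
    rw [hp, hEk, one_smul, sub_self]
  have hpp : ∀ k a, p k (p k a) = p k a := by
    intro k a
    rw [hp k (p k a), hpk, zero_smul, sub_zero]
  let x : ∀ k, (F1' × (Fin t → R)) →ₗ[R] G1 k := fun k => q1 k ∘ₗ μ11 (E k) ∘ₗ p k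
  have hx : ∀ k a, x k a = q1 k (μ11 (E k) (p k a)) := fun k a => rfl
  have hm1x : ∀ k a, m1 k (x k a) = - d1 (p k a) := by
    intro k a
    rw [hx, hq1, hFleib1]
    simp [hpk, hEk]
  have hβex : ∀ k, ∃ B : (F1' × (Fin t → R)) →ₗ[R] (F1' × (Fin t → R)) →ₗ[R] G2 k,
      (∀ a, B a a = 0) ∧ ∀ a b, m2 k (B a b) = q1 k (μ11 (p k a) (p k b)) := by
    intro k
    have := exists_alternating_lift (m2 k)
      (((μ11.compl₁₂ (p k) (p k))).compr₂ (q1 k))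
      (by intro a; simp [hFalt])
      (by
        intro a b
        have h1 : q1 k (μ11 (p k a) (p k b)) ∈ LinearMap.ker (m1 k) := by
          rw [LinearMap.mem_ker, hq1, hFleib1]
          simp [hpk]
        rw [hGres1] at h1
        exact h1)
    exact this
  choose β hβalt hβ using hβex
  have hβskew : ∀ k a c, β k a c = - β k c a := by
    intro k a c
    have h1 := hβalt k (a + c)
    simp only [map_add, LinearMap.add_apply, hβalt, zero_add, add_zero] at h1
    exact eq_neg_of_add_eq_zero_right h1
  let t11 : (F1' × (∀ i, G1 i)) →ₗ[R] (F1' × (∀ i, G1 i)) →ₗ[R] (F2 × (∀ i, G2 i)) :=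
    LinearMap.mk₂ R
      (fun z z' => (μ11 (φ z) (φ z'), fun k =>
        β k (p k (φ z)) (p k (φ z')) - γ11 k (z.2 k) (x k (φ z'))
          + γ11 k (z'.2 k) (x k (φ z)) - d1 (E k) • γ11 k (z.2 k) (z'.2 k)))
      (by
        intro a b c
        refine Prod.ext ?_ (funext fun k => ?_)
        · simp
        · simp only [map_add, LinearMap.add_apply, Prod.snd_add, Pi.add_apply]
          module)
      (by
        intro r a c
        refine Prod.ext ?_ (funext fun k => ?_)
        · simp
        · simp only [map_smul, LinearMap.smul_apply, Prod.smul_snd, Pi.smul_apply]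
          module)
      (by
        intro a b c
        refine Prod.ext ?_ (funext fun k => ?_)
        · simp
        · simp only [map_add, LinearMap.add_apply, Prod.snd_add, Pi.add_apply]
          module)
      (by
        intro r a c
        refine Prod.ext ?_ (funext fun k => ?_)
        · simp
        · simp only [map_smul, LinearMap.smul_apply, Prod.smul_snd, Pi.smul_apply]
          module)
  have ht1 : ∀ z z', (t11 z z').1 = μ11 (φ z) (φ z') := fun z z' => rfl
  have ht2 : ∀ z z' k, (t11 z z').2 k =
      β k (p k (φ z)) (p k (φ z')) - γ11 k (z.2 k) (x k (φ z'))
          + γ11 k (z'.2 k) (x k (φ z)) - d1 (E k) • γ11 k (z.2 k) (z'.2 k) :=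
    fun z z' k => rfl
  -- `d1` in coordinates
  have hd1 : ∀ a : F1' × (Fin t → R), d1 a = d1 (a.1, 0) + ∑ i, a.2 i * d1 (E i) := by
    intro a
    have h1 : a = (a.1, 0) + ∑ i, a.2 i • E i := by
      refine Prod.ext ?_ ?_
      · simp [E, Prod.fst_sum]
      · ext j
        simp [E, Prod.snd_sum, Finset.sum_apply, Pi.single_apply]
    conv_lhs => rw [h1]
    simp [map_sum]
  have hl1 : ∀ z, Tl1 d1 m1 z = d1 (φ z) := by
    intro z
    rw [hd1 (φ z), hφ]
    simp [Tl1, E, sub_eq_add_neg]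
  have hdp : ∀ k a, d1 (p k a) = d1 a - a.2 k * d1 (E k) := by
    intro k a
    rw [hp]; simp
  have hφl2 : ∀ w, φ (Tl2 d2 q1 m2 w) = d2 w.1 := by
    intro w
    rw [hφ]
    refine Prod.ext rfl (funext fun i => ?_)
    have h0 : m1 i (m2 i (w.2 i)) = 0 := by
      rw [← LinearMap.mem_ker, hGres1]
      exact ⟨_, rfl⟩
    simp [Tl2, h0, hq1]
  -- first Leibniz rule
  have hsplit : ∀ k a b, q1 k (μ11 a b) =
      q1 k (μ11 (p k a) (p k b)) + a.2 k • x k b - b.2 k • x k a := by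
    intro k a b
    have e1 : a = p k a + a.2 k • E k := by rw [hp]; abel
    have e2 : b = p k b + b.2 k • E k := by rw [hp]; abel
    conv_lhs => rw [e1, e2]
    simp only [map_add, map_smul, LinearMap.add_apply, LinearMap.smul_apply, hFalt, hx]
    rw [hFskew (p k a) (E k)]
    simp only [map_neg, smul_zero, add_zero, smul_neg, map_zero]
    abel
  have hm2t : ∀ z z' k, m2 k ((t11 z z').2 k) =
      q1 k (μ11 (φ z) (φ z')) + d1 (φ z) • z'.2 k - d1 (φ z') • z.2 k := by
    intro z z' k
    have e1 : (φ z).2 k = - m1 k (z.2 k) := rfl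
    have e2 : (φ z').2 k = - m1 k (z'.2 k) := rfl
    rw [ht2, hsplit k (φ z) (φ z')]
    simp only [map_sub, map_add, map_smul, hβ, hpp, hGleib1, hm1x, hdp, e1, e2]
    module
  have A1 : ∀ z z', Tl2 d2 q1 m2 (t11 z z') = Tl1 d1 m1 z • z' - Tl1 d1 m1 z' • z := by
    intro z z'
    rw [hl1, hl1]
    refine Prod.ext ?_ (funext fun k => ?_)
    · change (d2 (μ11 (φ z) (φ z'))).1 = _
      rw [hFleib1]
      rfl
    · change - q1 k (μ11 (φ z) (φ z')) + m2 k ((t11 z z').2 k) =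
        d1 (φ z) • z'.2 k - d1 (φ z') • z.2 k
      rw [hm2t]
      abel
  have A2 : ∀ z, t11 z z = 0 := by
    intro z
    refine Prod.ext (hFalt _) (funext fun k => ?_)
    rw [ht2, hβalt, hGalt]
    simp
  have A3 : ∀ z z', t11 z z' = - t11 z' z := by
    intro a c
    have h1 := A2 (a + c)
    simp only [map_add, LinearMap.add_apply, A2, zero_add, add_zero] at h1
    exact eq_neg_of_add_eq_zero_right h1
  -- linear versions of the differentials
  let L2 : (F2 × (∀ i, G2 i)) →ₗ[R] (F1' × (∀ i, G1 i)) :=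
    { toFun := Tl2 d2 q1 m2
      map_add' := by
        intro a b
        refine Prod.ext ?_ (funext fun k => ?_)
        · simp [Tl2]
        · simp only [Tl2, Prod.snd_add, Prod.fst_add, map_add, Pi.add_apply]; abel
      map_smul' := by
        intro r a
        refine Prod.ext ?_ (funext fun k => ?_)
        · simp [Tl2]
        · simp [Tl2] }
  have hL2 : ∀ w, L2 w = Tl2 d2 q1 m2 w := fun w => rfl
  let L3 : (F3 × (∀ i, G3 i)) →ₗ[R] (F2 × (∀ i, G2 i)) :=
    { toFun := Tl3 d3 q2 m3
      map_add' := by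
        intro a b
        refine Prod.ext ?_ (funext fun k => ?_)
        · simp [Tl3]
        · simp only [Tl3, Prod.snd_add, Prod.fst_add, map_add, Pi.add_apply]; abel
      map_smul' := by
        intro r a
        refine Prod.ext ?_ (funext fun k => ?_)
        · simp [Tl3]
        · simp [Tl3] }
  have hL3 : ∀ w, L3 w = Tl3 d3 q2 m3 w := fun w => rfl
  have hL3inj : Function.Injective L3 := by
    rw [← LinearMap.ker_eq_bot, LinearMap.ker_eq_bot']
    intro u hu
    have h1 : d3 u.1 = 0 := congrArg Prod.fst hu
    have h2 : u.1 = 0 := LinearMap.ker_eq_bot'.1 hFres3 _ h1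
    refine Prod.ext h2 (funext fun k => ?_)
    have h3 : q2 k u.1 + m3 k (u.2 k) = 0 := congrFun (congrArg Prod.snd hu) k
    rw [h2, map_zero, zero_add] at h3
    exact LinearMap.ker_eq_bot'.1 (hGres3 k) _ h3
  have hexact : ∀ w, L2 w = 0 → ∃ u, L3 u = w := by
    intro w hw
    have h1 : d2 w.1 = 0 := by
      rw [← hφl2, ← hL2, hw, map_zero]
    have h2 : w.1 ∈ LinearMap.range d3 := by
      rw [← hFres2]; exact h1
    obtain ⟨u, hu⟩ := h2
    have h3 : ∀ k, ∃ v, m3 k v = w.2 k - q2 k u := by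
      intro k
      have h4 : w.2 k - q2 k u ∈ LinearMap.ker (m2 k) := by
        have h5 : - q1 k w.1 + m2 k (w.2 k) = 0 := congrFun (congrArg Prod.snd hw) k
        rw [LinearMap.mem_ker, map_sub, hq2, hu, ← h5]
        abel
      rw [hGres2] at h4
      exact h4
    choose v hv using h3
    refine ⟨(u, v), Prod.ext hu (funext fun k => ?_)⟩
    change q2 k u + m3 k (v k) = w.2 k
    rw [hv]; abel
  have hd12 : ∀ v, d1 (d2 v) = 0 := by
    intro v
    rw [← LinearMap.mem_ker, hFres1]
    exact ⟨_, rfl⟩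
  have hex : ∀ z w, ∃ u, L3 u = d1 (φ z) • w - t11 z (L2 w) := by
    intro z w
    apply hexact
    rw [map_sub, map_smul, hL2 (t11 z (L2 w)), A1, hl1, hl1, hL2 w, hφl2, hd12]
    simp
  choose τ hτ using hex
  let t12 : (F1' × (∀ i, G1 i)) →ₗ[R] (F2 × (∀ i, G2 i)) →ₗ[R] (F3 × (∀ i, G3 i)) :=
    LinearMap.mk₂ R τ
      (by
        intro a b c
        apply hL3inj
        simp only [map_add, hτ, LinearMap.add_apply]
        module)
      (by
        intro r a c
        apply hL3inj
        simp only [map_smul, hτ, LinearMap.smul_apply, smul_eq_mul]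
        module)
      (by
        intro a b c
        apply hL3inj
        simp only [map_add, hτ]
        module)
      (by
        intro r a c
        apply hL3inj
        simp only [map_smul, hτ]
        module)
  have hL3t : ∀ z w, L3 (t12 z w) = d1 (φ z) • w - t11 z (L2 w) := hτ
  have hd3inj : Function.Injective d3 := LinearMap.ker_eq_bot.1 hFres3
  -- the `F₃`-component
  have hF3 : ∀ z w, (t12 z w).1 = μ12 (φ z) w.1 := by
    intro z w
    apply hd3inj
    have h1 : d3 (t12 z w).1 = (d1 (φ z) • w - t11 z (L2 w)).1 :=
      congrArg Prod.fst (hL3t z w)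
    rw [h1, hFleib2, Prod.fst_sub, ht1, hL2, hφl2]
    rfl
  -- products of two `G`-factors
  have hGG : ∀ (g : ∀ i, G1 i) (c : ∀ i, G2 i), t12 (0, g) (0, c) =
      (0, fun k => - γ12 k (x k (φ (0, g))) (c k) - d1 (E k) • γ12 k (g k) (c k)) := by
    intro g c
    apply hL3inj
    rw [hL3t]
    have h0 : φ (L2 (0, c)) = 0 := by rw [hL2, hφl2, map_zero]
    refine Prod.ext ?_ (funext fun k => ?_)
    · rw [Prod.fst_sub, ht1, h0]
      simp [hL3, Tl3]
    · have e0 : (L2 ((0 : F2), c)).2 k = m2 k (c k) := by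
        simp [hL2, Tl2]
      have e1 : (φ ((0 : F1'), g)).2 k = - m1 k (g k) := rfl
      have e2 : (d1 (φ ((0 : F1'), g)) • ((0 : F2), c) - t11 (0, g) (L2 (0, c))).2 k =
        d1 (φ ((0 : F1'), g)) • c k - (t11 (0, g) (L2 (0, c))).2 k := rfl
      have e3 : (L3 ((0 : F3), fun k => - γ12 k (x k (φ (0, g))) (c k) -
          d1 (E k) • γ12 k (g k) (c k))).2 k =
          m3 k (- γ12 k (x k (φ (0, g))) (c k) - d1 (E k) • γ12 k (g k) (c k)) := by
        simp [hL3, Tl3]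
      rw [e2, e3, ht2, h0, e0, hGskew k (m2 k (c k))]
      simp only [map_sub, map_neg, map_smul, map_zero, hGleib2, hm1x, hdp, e1]
      module
  have hφm : ∀ g : ∀ i, G1 i,
      φ (0, g) ∈ maximalIdeal R • (⊤ : Submodule R (F1' × (Fin t → R))) := by
    intro g
    rw [hφ]
    refine prod_pi_mem_smul_top _ _ _ (zero_mem _) fun i => neg_mem ?_
    have := Submodule.smul_mem_smul (hminG1 i (g i)) (Submodule.mem_top (x := (1 : R)))
    simpa using this
  have hφs : ∀ (i : Fin t) (g : G1 i), φ (0, Pi.single i g) = -(m1 i g) • E i := by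
    intro i g
    rw [hφ]
    refine Prod.ext ?_ (funext fun j => ?_)
    · simp [E]
    · by_cases h : j = i
      · subst h; simp [E]
      · simp [E, h]
  have hφf : ∀ f : F1', φ (f, 0) = (f, 0) := by
    intro f
    rw [hφ]
    refine Prod.ext rfl (funext fun j => ?_)
    simp
  have hEd : ∀ i, ((0 : F1'), (Pi.single i 1 : Fin t → R)) = E i := fun i => rfl
  have hsm : ∀ (i k : Fin t) (r : R) (g : G1 i),
      (Pi.single i (r • g) : ∀ i, G1 i) k = r • (Pi.single i g : ∀ i, G1 i) k := by
    intro i k r g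
    rw [Pi.single_smul]; rfl
  refine ⟨t11, t12, ⟨A1, A2, A3, ?_, ?_⟩, ⟨?_, ?_, ?_, ?_, ?_, ?_, ?_, ?_, ?_⟩, ?_, ?_⟩
  · intro z w
    rw [hl1]
    exact hL3t z w
  · intro z z' z''
    apply hL3inj
    rw [hL3t, hL3t, hL2, hL2, A1, A1, hl1, hl1, hl1]
    simp only [map_sub, map_smul]
    rw [A3 z'' z, A3 z'' z', A3 z z']
    module
  · -- (1)
    intro f f'
    refine ⟨(t11 (f, 0) (f', 0)).2, fun i => ?_, ?_⟩
    · rw [hm2t, hφf, hφf]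
      simp
    · refine Prod.ext ?_ rfl
      rw [ht1, hφf, hφf]
  · -- (2)
    intro f i g
    have h1 : μ11 (f, 0) (-(m1 i g) • E i) = m1 i g • μ11 (E i) (f, 0) := by
      rw [map_smul, hFskew (f, 0) (E i)]
      module
    refine ⟨(t11 (f, 0) (0, Pi.single i g)).2, fun j => ?_, ?_⟩
    · rw [hm2t, hφf, hφs, h1, hsm, map_smul, hEd]
      simp
    · refine Prod.ext ?_ rfl
      rw [ht1, hφf, hφs, h1]
  · -- (3)
    intro i g g'
    refine Prod.ext ?_ (funext fun k => ?_)
    · rw [ht1, hφs, hφs]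
      simp [hFalt]
    · rw [ht2, hφs, hφs]
      by_cases h : k = i
      · subst h
        simp [hx, hpE, hEd]
      · simp [h, hβalt]
  · -- (4)
    intro i j hij g g'
    have h1 : μ11 (-(m1 i g) • E i) (-(m1 j g') • E j) =
        (m1 i g * m1 j g') • μ11 (E i) (E j) := by
      simp only [map_smul, LinearMap.smul_apply]
      module
    refine ⟨(t11 (0, Pi.single i g) (0, Pi.single j g')).2, fun k => ?_, ?_⟩
    · rw [hm2t, hφs, hφs, h1, hsm, hsm, map_smul, map_smul, map_smul, hEd, hEd]
      simp only [smul_eq_mul]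
      module
    · refine Prod.ext ?_ rfl
      rw [ht1, hφs, hφs, h1]
  · -- (5)
    intro f w
    refine ⟨(t12 (f, 0) (w, 0)).2, Prod.ext ?_ rfl⟩
    rw [hF3, hφf]
  · -- (6)
    intro f i c
    refine ⟨(t12 (f, 0) (0, Pi.single i c)).2, Prod.ext ?_ rfl⟩
    rw [hF3, map_zero]
  · -- (7)
    intro i g c
    rw [hGG, hφs]
    refine Prod.ext rfl (funext fun k => ?_)
    by_cases h : k = i
    · subst h
      simp [hx, hpE, hEd]
    · simp [h]
  · -- (8)
    intro i j _ g c
    refine ⟨(t12 (0, Pi.single i g) (0, Pi.single j c)).2, Prod.ext ?_ rfl⟩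
    rw [hF3, map_zero]
  · -- (9)
    intro i g w
    refine ⟨(t12 (0, Pi.single i g) (w, 0)).2, Prod.ext ?_ rfl⟩
    rw [hF3, hφs, map_smul]
    rfl
  · intro g g'
    refine prod_pi_mem_smul_top _ _ _ ?_ fun k => ?_
    · exact map_mem_smul_top' _ (μ11 (φ (0, g))) (hφm g')
    · refine sub_mem (add_mem (sub_mem ?_ ?_) ?_) ?_
      · exact map_mem_smul_top' _ (β k (p k (φ (0, g))) ∘ₗ p k) (hφm g')
      · exact map_mem_smul_top' _ (γ11 k (g k) ∘ₗ x k) (hφm g')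
      · exact map_mem_smul_top' _ (γ11 k (g' k) ∘ₗ x k) (hφm g)
      · exact Submodule.smul_mem_smul (hminF1 _) Submodule.mem_top
  · intro g c
    rw [hGG]
    refine prod_pi_mem_smul_top _ _ _ (zero_mem _) fun k => ?_
    refine sub_mem (neg_mem ?_) ?_
    · exact map_mem_smul_top' _ ((γ12 k).flip (c k) ∘ₗ x k) (hφm g)
    · exact Submodule.smul_mem_smul (hminF1 _) Submodule.mem_top
end

section
/- Let (R, 𝔪, k) be a regular local ring of dimension 3, I = (φ_1, …, φ_n) ⊆ 𝔪² an ideal with pd_R(R/I) = 3, σ an index set, (F_•, d_•) a minimal DG-algebra free resolution of R/I, (K_•, m_•) the Koszul complex resolving k, and Q_1 : F_2 → ⊕_{i=1}^t K_1, Q_2 : F_3 → ⊕_{i=1}^t K_2 the comparison maps of the trimming complex T_• resolving R/tm_σ(I). Then the image of F̄_1 ·_F F̄_1 in F̄_2 is contained in ker(Q_1 ⊗ k), and the image of F̄_1 ·_F F̄_2 in F̄_3 is contained in ker(Q_2 ⊗ k). Consequently, the only possibly nontrivial products in the graded k-algebra T̄_• are those of the forms F̄_1' · F̄_1' and F̄_1'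 · F̄_2. -/
open IsLocalRing

/-!
STATEMENT 6 (Lemma 4.5 of the paper): let `(R, 𝔪, k)` be a regular local ring of
dimension 3 (`𝔪 = (x 0, x 1, x 2)` with `x` a regular sequence), `I ⊆ 𝔪²` an ideal
with `pd_R (R/I) = 3`, `σ` an index set, `(F_•, d_•)` a minimal DG-algebra free
resolution of `R/I` (its degree-1 term decomposed as `F₁' × (Fin t → R)`, the `t`
trimmed generators being the coordinates), `(K_•, m_•)` the Koszul complex resolving
`k` (given here explicitly on `K₁ = K₂ = Fin 3 → R`, `K₃ = R`, together with its
DG-algebra products `k11 : K₁ × K₁ → K₂`, `k12 : K₁ × K₂ → K₃`), and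
`q1 i = Q₁`-components `F₂ → K₁`, `q2 i = Q₂`-components `F₃ → K₂` the comparison maps
of the trimming complex `T_•` resolving `R/tm_σ(I)`.

Conclusion: the image of `F̄₁ ·_F F̄₁` in `F̄₂` lies in `ker (Q₁ ⊗ k)` and the image of
`F̄₁ ·_F F̄₂` in `F̄₃` lies in `ker (Q₂ ⊗ k)` (elementwise: `q1 i (μ11 u v) ∈ 𝔪K₁` and
`q2 i (μ12 u w) ∈ 𝔪K₂`); consequently, for the DG-algebra structure of Theorem 3.2 on
`T_•`, the only possibly nontrivial products of `T̄_•` are `F̄₁'·F̄₁'` and `F̄₁'·F̄₂`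
(i.e. every product agrees, modulo `𝔪 • T`, with the product of the `F`-components).
-/
universe u

/-! Helper lemmas -/

theorem aux_map_mem {R : Type*} [CommRing R] {M N : Type*} [AddCommGroup M] [Module R M]
    [AddCommGroup N] [Module R N] (I J : Ideal R) (f : M →ₗ[R] N)
    (hf : ∀ y, f y ∈ J • (⊤ : Submodule R N)) {y : M} (hy : y ∈ I • (⊤ : Submodule R M)) :
    f y ∈ (I * J) • (⊤ : Submodule R N) := by
  refine Submodule.smul_induction_on hy (fun r hr n _ => ?_) (fun a b ha hb => ?_)
  · rw [map_smul, Submodule.mul_smul]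
    exact Submodule.smul_mem_smul hr (hf n)
  · rw [map_add]; exact Submodule.add_mem _ ha hb

theorem aux_map_mem' {R : Type*} [CommRing R] {M N : Type*} [AddCommGroup M] [Module R M]
    [AddCommGroup N] [Module R N] (I : Ideal R) (f : M →ₗ[R] N)
    {y : M} (hy : y ∈ I • (⊤ : Submodule R M)) :
    f y ∈ I • (⊤ : Submodule R N) := by
  have := aux_map_mem I ⊤ f (fun y => by simp) hy
  simpa using this

theorem aux_pi_mem {R : Type*} [CommRing R] {ι : Type*} [Finite ι] {N : Type*}
    [AddCommGroup N] [Module R N] (I : Ideal R)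
    {y : ι → N} : y ∈ I • (⊤ : Submodule R (ι → N)) ↔ ∀ i, y i ∈ I • (⊤ : Submodule R N) := by
  classical
  have := Fintype.ofFinite ι
  constructor
  · intro h i
    exact aux_map_mem' I (LinearMap.proj i) h
  · intro h
    rw [← Finset.univ_sum_single y]
    exact Submodule.sum_mem _ fun i _ => aux_map_mem' I (LinearMap.single R (fun _ => N) i) (h i)

theorem aux_self_mem {R : Type*} [CommRing R] (I : Ideal R) {y : R} :
    y ∈ I • (⊤ : Submodule R R) ↔ y ∈ I := by
  simp

theorem aux_vec_mem {R : Type*} [CommRing R] {ι : Type*} [Finite ι] (I : Ideal R)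
    {y : ι → R} : y ∈ I • (⊤ : Submodule R (ι → R)) ↔ ∀ i, y i ∈ I := by
  rw [aux_pi_mem]; simp

theorem aux_prod_mem {R : Type*} [CommRing R] {M N : Type*} [AddCommGroup M] [Module R M]
    [AddCommGroup N] [Module R N] (I : Ideal R) {y : M × N}
    (h1 : y.1 ∈ I • (⊤ : Submodule R M)) (h2 : y.2 ∈ I • (⊤ : Submodule R N)) :
    y ∈ I • (⊤ : Submodule R (M × N)) := by
  have : y = LinearMap.inl R M N y.1 + LinearMap.inr R M N y.2 := by ext <;> simp
  rw [this]
  exact Submodule.add_mem _ (aux_map_mem' I _ h1) (aux_map_mem' I _ h2)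

theorem aux_inj_lift {R : Type*} [CommRing R] {M N P Q : Type*} [AddCommGroup M] [Module R M]
    [AddCommGroup N] [Module R N] [AddCommGroup P] [Module R P] [AddCommGroup Q] [Module R Q]
    (s : Q →ₗ[R] P) (hs : Function.Injective s) (B : M →ₗ[R] N →ₗ[R] P)
    (h : ∀ a b, ∃ c, s c = B a b) :
    ∃ T : M →ₗ[R] N →ₗ[R] Q, ∀ a b, s (T a b) = B a b := by
  choose T hT using h
  refine ⟨LinearMap.mk₂ R T ?_ ?_ ?_ ?_, fun a b => hT a b⟩
  all_goals intros; apply hs; simp [hT]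

theorem aux_alt_lift {R : Type*} [CommRing R] [Nontrivial R] {M P Q : Type*} [AddCommGroup M] [Module R M]
    [Module.Free R M] [Module.Finite R M]
    [AddCommGroup P] [Module R P] [AddCommGroup Q] [Module R Q]
    (s : Q →ₗ[R] P) (B : M →ₗ[R] M →ₗ[R] P) (hB : ∀ a, B a a = 0)
    (h : ∀ a b, ∃ c, s c = B a b) :
    ∃ T : M →ₗ[R] M →ₗ[R] Q, (∀ a, T a a = 0) ∧ ∀ a b, s (T a b) = B a b := by
  classical
  have hBs : ∀ a b, B a b = - B b a := by
    intro a b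
    have := hB (a + b)
    simp only [map_add, LinearMap.add_apply, hB, zero_add, add_zero] at this
    rw [add_comm] at this
    exact eq_neg_of_add_eq_zero_left this
  choose c hc using h
  obtain ⟨n, ⟨b⟩⟩ : ∃ n, Nonempty (Module.Basis (Fin n) R M) :=
    ⟨_, ⟨Module.finBasis R M⟩⟩
  let T : M →ₗ[R] M →ₗ[R] Q := LinearMap.mk₂ R
    (fun u v => ∑ i, ∑ j, if i < j then
      (b.repr u i * b.repr v j - b.repr u j * b.repr v i) • c (b i) (b j) else 0)
    (by
      intro u u' v
      rw [← Finset.sum_add_distrib]; refine Finset.sum_congr rfl fun i _ => ?_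
      rw [← Finset.sum_add_distrib]; refine Finset.sum_congr rfl fun j _ => ?_
      split_ifs
      · simp only [map_add, Finsupp.add_apply]; module
      · simp)
    (by
      intro r u v
      rw [Finset.smul_sum]; refine Finset.sum_congr rfl fun i _ => ?_
      rw [Finset.smul_sum]; refine Finset.sum_congr rfl fun j _ => ?_
      split_ifs
      · simp only [map_smul, Finsupp.smul_apply, smul_eq_mul]; module
      · simp)
    (by
      intro u v v'
      rw [← Finset.sum_add_distrib]; refine Finset.sum_congr rfl fun i _ => ?_
      rw [← Finset.sum_add_distrib]; refine Finset.sum_congr rfl fun j _ => ?_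
      split_ifs
      · simp only [map_add, Finsupp.add_apply]; module
      · simp)
    (by
      intro r u v
      rw [Finset.smul_sum]; refine Finset.sum_congr rfl fun i _ => ?_
      rw [Finset.smul_sum]; refine Finset.sum_congr rfl fun j _ => ?_
      split_ifs
      · simp only [map_smul, Finsupp.smul_apply, smul_eq_mul]; module
      · simp)
  have hT : ∀ u v, T u v = ∑ i, ∑ j, if i < j then
      (b.repr u i * b.repr v j - b.repr u j * b.repr v i) • c (b i) (b j) else 0 :=
    fun _ _ => rfl
  have hTa : ∀ a, T a a = 0 := by
    intro a
    rw [hT]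
    refine Finset.sum_eq_zero fun i _ => Finset.sum_eq_zero fun j _ => ?_
    split_ifs
    · rw [mul_comm, sub_self, zero_smul]
    · rfl
  have hTs : ∀ a b, T a b = - T b a := by
    intro a b
    have := hTa (a + b)
    simp only [map_add, LinearMap.add_apply, hTa, zero_add, add_zero] at this
    rw [add_comm] at this
    exact eq_neg_of_add_eq_zero_left this
  have hlt : ∀ k l, k < l → s (T (b k) (b l)) = B (b k) (b l) := by
    intro k l hkl
    rw [hT, Finset.sum_eq_single k, Finset.sum_eq_single l, if_pos hkl]
    · simp [hkl.ne, hc]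
    · intro j _ hj
      split_ifs with h
      · have : l ≠ k := hkl.ne'
        simp [Finsupp.single_apply, this, hj.symm]
      · rfl
    · simp
    · intro i _ hi
      refine Finset.sum_eq_zero fun j _ => ?_
      split_ifs with h
      · have h1 : ¬ (k = j ∧ l = i) := by
          rintro ⟨rfl, rfl⟩; exact absurd h (not_lt.2 hkl.le)
        rcases not_and_or.1 h1 with h1 | h1 <;>
        simp [Finsupp.single_apply, h1, hi.symm]
      · rfl
    · simp
  refine ⟨T, hTa, ?_⟩
  have key : T.compr₂ s = B := by
    refine b.ext fun k => b.ext fun l => ?_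
    rw [LinearMap.compr₂_apply]
    rcases lt_trichotomy k l with h | h | h
    · exact hlt k l h
    · subst h; rw [hTa, hB, map_zero]
    · rw [hTs, hBs, map_neg, hlt l k h]
  intro u v
  rw [← key, LinearMap.compr₂_apply]

/-- elementary consequences of regularity of `x 0, x 1, x 2` -/
theorem aux_regular {R : Type*} [CommRing R] (x : Fin 3 → R)
    (hreg : RingTheory.Sequence.IsRegular R [x 0, x 1, x 2]) :
    (∀ a, x 0 * a = 0 → a = 0) ∧ (∀ a b, x 1 * a = x 0 * b → ∃ c, a = c * x 0) ∧
    (∀ a b c, x 2 * a = x 0 * b + x 1 * c → ∃ d e, a = d * x 0 + e * x 1) := by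
  have h := hreg.toIsWeaklyRegular
  rw [RingTheory.Sequence.isWeaklyRegular_iff_Fin] at h
  have key : ∀ (J : Ideal R) (r : R), IsSMulRegular (R ⧸ (J • (⊤ : Submodule R R))) r →
      ∀ a, r * a ∈ J → a ∈ J := by
    intro J r hr a ha
    rw [isSMulRegular_iff_right_eq_zero_of_smul] at hr
    have := hr (Submodule.Quotient.mk a) (by
      rw [← Submodule.Quotient.mk_smul, Submodule.Quotient.mk_eq_zero]
      simpa using ha)
    rw [Submodule.Quotient.mk_eq_zero] at this
    simpa using this
  have h0 := key _ _ (h ⟨0, by simp⟩)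
  have h1 := key _ _ (h ⟨1, by simp⟩)
  have h2 := key _ _ (h ⟨2, by simp⟩)
  simp [Ideal.ofList] at h0
  simp [Ideal.ofList, Ideal.mem_span_singleton'] at h1
  simp [Ideal.ofList] at h2
  refine ⟨h0, ?_, ?_⟩
  · intro a b hab
    obtain ⟨c, hc⟩ := h1 a b (by rw [hab]; ring)
    exact ⟨c, hc.symm⟩
  · intro a b c habc
    have e : ({r | r = x 0 ∨ r = x 1} : Set R) = {x 0, x 1} := by ext; simp
    rw [e] at h2
    obtain ⟨d, e, hde⟩ := Ideal.mem_span_pair.1 (h2 a (by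
      rw [habc]; exact Ideal.mem_span_pair.2 ⟨b, c, by ring⟩))
    exact ⟨d, e, hde.symm⟩

theorem trimmed_ideal_trivial_products
    {R : Type} [CommRing R] [IsNoetherianRing R] [IsLocalRing R]
    -- `(R,𝔪,k)` regular local of dimension 3
    (x : Fin 3 → R)
    (hreg : RingTheory.Sequence.IsRegular R [x 0, x 1, x 2])
    (hx : Ideal.span {x 0, x 1, x 2} = maximalIdeal R)
    (t : ℕ)
    (F1' F2 F3 : Type)
    [AddCommGroup F1'] [Module R F1'] [Module.Free R F1'] [Module.Finite R F1']
    [AddCommGroup F2] [Module R F2] [Module.Free R F2] [Module.Finite R F2]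
    [AddCommGroup F3] [Module R F3] [Module.Free R F3] [Module.Finite R F3]
    (I : Ideal R)
    (d1 : (F1' × (Fin t → R)) →ₗ[R] R)
    (d2 : F2 →ₗ[R] (F1' × (Fin t → R)))
    (d3 : F3 →ₗ[R] F2)
    -- `F` is a minimal free resolution of `R/I`, and `I ⊆ 𝔪²`
    (hFres0 : LinearMap.range d1 = I)
    (hFres1 : LinearMap.ker d1 = LinearMap.range d2)
    (hFres2 : LinearMap.ker d2 = LinearMap.range d3)
    (hFres3 : LinearMap.ker d3 = ⊥)
    (hI2 : ∀ a, d1 a ∈ maximalIdeal R ^ 2)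
    (hminF2 : ∀ v, d2 v ∈ maximalIdeal R • (⊤ : Submodule R (F1' × (Fin t → R))))
    (hminF3 : ∀ w, d3 w ∈ maximalIdeal R • (⊤ : Submodule R F2))
    -- the Koszul complex `K` resolving `k = R/𝔪`, with its DG-algebra structure
    (km1 : (Fin 3 → R) →ₗ[R] R) (km2 : (Fin 3 → R) →ₗ[R] (Fin 3 → R))
    (km3 : R →ₗ[R] (Fin 3 → R))
    (hkm1 : ∀ v, km1 v = v 0 * x 0 + v 1 * x 1 + v 2 * x 2)
    (hkm2 : ∀ w, km2 w = fun l =>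
      if l = 0 then -(x 2 * w 1) - x 1 * w 2
      else if l = 1 then -(x 2 * w 0) + x 0 * w 2
      else x 1 * w 0 + x 0 * w 1)
    (hkm3 : ∀ r : R, km3 r = fun l =>
      if l = 0 then r * x 0 else if l = 1 then -(r * x 1) else r * x 2)
    (k11 : (Fin 3 → R) →ₗ[R] (Fin 3 → R) →ₗ[R] (Fin 3 → R))
    (k12 : (Fin 3 → R) →ₗ[R] (Fin 3 → R) →ₗ[R] R)
    (hk11 : ∀ v w, k11 v w = fun l =>
      if l = 0 then v 1 * w 2 - v 2 * w 1
      else if l = 1 then v 0 * w 2 - v 2 * w 0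
      else v 0 * w 1 - v 1 * w 0)
    (hk12 : ∀ v w, k12 v w = v 0 * w 0 - v 1 * w 1 + v 2 * w 2)
    -- the comparison maps `Q₁ = (q1 i)`, `Q₂ = (q2 i)` of the trimming complex
    (q1 : Fin t → (F2 →ₗ[R] (Fin 3 → R))) (q2 : Fin t → (F3 →ₗ[R] (Fin 3 → R)))
    (hq1 : ∀ i v, km1 (q1 i v) = (d2 v).2 i)
    (hq2 : ∀ i w, km2 (q2 i w) = q1 i (d3 w))
    -- the DG-algebra structure on `F`
    (μ11 : (F1' × (Fin t → R)) →ₗ[R] (F1' × (Fin t → R)) →ₗ[R] F2)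
    (μ12 : (F1' × (Fin t → R)) →ₗ[R] F2 →ₗ[R] F3)
    (hFleib1 : ∀ a b, d2 (μ11 a b) = d1 a • b - d1 b • a)
    (hFalt : ∀ a, μ11 a a = 0)
    (hFskew : ∀ a b, μ11 a b = - μ11 b a)
    (hFleib2 : ∀ a z, d3 (μ12 a z) = d1 a • z - μ11 a (d2 z))
    (hFassoc : ∀ a b c, μ12 c (μ11 a b) = μ12 a (μ11 b c)) :
    -- (a)  the image of `F̄₁ · F̄₁` lies in `ker (Q₁ ⊗ k)`
    (∀ (u v : F1' × (Fin t → R)) (i : Fin t),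
      q1 i (μ11 u v) ∈ maximalIdeal R • (⊤ : Submodule R (Fin 3 → R))) ∧
    -- (b)  the image of `F̄₁ · F̄₂` lies in `ker (Q₂ ⊗ k)`
    (∀ (u : F1' × (Fin t → R)) (w : F2) (i : Fin t),
      q2 i (μ12 u w) ∈ maximalIdeal R • (⊤ : Submodule R (Fin 3 → R))) ∧
    -- (c)  for the DG-algebra structure of Theorem 3.2 on `T`, the only possibly
    -- nontrivial products in `T̄` are `F̄₁'·F̄₁'` and `F̄₁'·F̄₂`
    (∃ (t11 : (F1' × (∀ _ : Fin t, Fin 3 → R)) →ₗ[R]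
          (F1' × (∀ _ : Fin t, Fin 3 → R)) →ₗ[R] (F2 × (∀ _ : Fin t, Fin 3 → R)))
       (t12 : (F1' × (∀ _ : Fin t, Fin 3 → R)) →ₗ[R]
          (F2 × (∀ _ : Fin t, Fin 3 → R)) →ₗ[R] (F3 × (∀ _ : Fin t, R))),
      TrimDGAxioms d1 d2 d3 (fun _ => km1) (fun _ => km2) (fun _ => km3) q1 q2 t11 t12 ∧
      TrimDGFormulas d1 d3 (fun _ => km1) (fun _ => km2) (fun _ => km3) q1 q2 μ11 μ12
        (fun _ => k11) (fun _ => k12) t11 t12 ∧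
      (∀ z z' : F1' × (∀ _ : Fin t, Fin 3 → R),
        t11 z z' - t11 (z.1, 0) (z'.1, 0) ∈
          maximalIdeal R • (⊤ : Submodule R (F2 × (∀ _ : Fin t, Fin 3 → R)))) ∧
      (∀ (z : F1' × (∀ _ : Fin t, Fin 3 → R)) (w : F2 × (∀ _ : Fin t, Fin 3 → R)),
        t12 z w - t12 (z.1, 0) (w.1, 0) ∈
          maximalIdeal R • (⊤ : Submodule R (F3 × (∀ _ : Fin t, R))))) := by
  obtain ⟨r0, r1, r2⟩ := aux_regular x hreg
  set m := maximalIdeal R with hm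
  have hxm : ∀ l, x l ∈ m := by
    intro l
    rw [← hx]
    apply Ideal.subset_span
    fin_cases l <;> simp
  -- exactness of the Koszul complex
  have ex1 : ∀ v, km1 v = 0 → ∃ w, km2 w = v := by
    intro v hv
    rw [hkm1] at hv
    obtain ⟨a, b, hab⟩ := r2 (v 2) (- v 0) (- v 1) (by linear_combination hv)
    obtain ⟨c, hc⟩ := r1 (v 1 + b * x 2) (- v 0 - a * x 2)
      (by rw [hab] at hv; linear_combination hv)
    have h0 := r0 (v 0 + a * x 2 + c * x 1)
      (by rw [hab] at hv; linear_combination hv - x 1 * hc)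
    refine ⟨![b, a, c], ?_⟩
    rw [hkm2]
    funext l
    fin_cases l
    · simp; linear_combination - h0
    · simp; linear_combination - hc
    · simp; linear_combination - hab
  have ex2 : ∀ w, km2 w = 0 → ∃ r, km3 r = w := by
    intro w hw
    rw [hkm2] at hw
    have e1 := congrFun hw 1
    have e2 := congrFun hw 2
    simp at e1 e2
    obtain ⟨r, hr⟩ := r1 (w 0) (- w 1) (by linear_combination e2)
    have h1 := r0 (x 1 * r + w 1) (by rw [hr] at e2; linear_combination e2)
    have h2 := r0 (w 2 - x 2 * r) (by rw [hr] at e1; linear_combination e1)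
    refine ⟨r, ?_⟩
    rw [hkm3]
    funext l
    fin_cases l
    · simp [hr]
    · simp; linear_combination - h1
    · simp; linear_combination - h2
  have k3inj : ∀ r, km3 r = 0 → r = 0 := by
    intro r hr
    rw [hkm3] at hr
    have := congrFun hr 0
    simp at this
    exact r0 r (by rw [mul_comm]; exact this)
  have k12zero : ∀ w, km1 (km2 w) = 0 := by
    intro w; rw [hkm1, hkm2]; simp; ring
  have k23zero : ∀ r, km2 (km3 r) = 0 := by
    intro r; rw [hkm2, hkm3]; funext l; fin_cases l <;> simp <;> ring
  have kleib1 : ∀ v w, km2 (k11 v w) = km1 v • w - km1 w • v := by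
    intro v w; rw [hkm2, hk11, hkm1, hkm1]; funext l; fin_cases l <;> simp <;> ring
  have kleib2 : ∀ v w, km3 (k12 v w) = km1 v • w - k11 v (km2 w) := by
    intro v w; rw [hkm3, hk12, hkm1, hk11, hkm2]; funext l; fin_cases l <;> simp <;> ring
  have kalt : ∀ v, k11 v v = 0 := by
    intro v; rw [hk11]; funext l; fin_cases l <;> simp <;> ring
  have kskew : ∀ v w, k11 v w = - k11 w v := by
    intro v w; rw [hk11, hk11]; funext l; fin_cases l <;> simp <;> ring
  have km1m : ∀ v, km1 v ∈ m := by
    intro v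
    rw [hkm1]
    exact Ideal.add_mem _ (Ideal.add_mem _ (Ideal.mul_mem_left _ _ (hxm 0))
      (Ideal.mul_mem_left _ _ (hxm 1))) (Ideal.mul_mem_left _ _ (hxm 2))
  have km2m : ∀ w l, km2 w l ∈ m := by
    intro w l
    rw [hkm2]
    have h0 := hxm 0
    have h1 := hxm 1
    have h2 := hxm 2
    fin_cases l
    · exact Ideal.sub_mem _ (neg_mem (Ideal.mul_mem_right _ _ h2)) (Ideal.mul_mem_right _ _ h1)
    · exact Ideal.add_mem _ (neg_mem (Ideal.mul_mem_right _ _ h2)) (Ideal.mul_mem_right _ _ h0)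
    · exact Ideal.add_mem _ (Ideal.mul_mem_right _ _ h1) (Ideal.mul_mem_right _ _ h0)
  -- minimality of the generators
  have hsq : ∀ y ∈ m ^ 2, ∃ a : Fin 3 → R, (∀ l, a l ∈ m) ∧ km1 a = y := by
    intro y hy
    rw [pow_two] at hy
    refine Submodule.mul_induction_on hy ?_ ?_
    · intro r hr s hs
      rw [← hx, Ideal.mem_span_insert] at hs
      obtain ⟨a, z, hz, rfl⟩ := hs
      obtain ⟨b, c, rfl⟩ := Ideal.mem_span_pair.1 hz
      refine ⟨r • ![a, b, c], fun l => Ideal.mul_mem_right _ _ hr, ?_⟩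
      rw [hkm1]; simp; ring
    · rintro _ _ ⟨a, ha, rfl⟩ ⟨b, hb, rfl⟩
      exact ⟨a + b, fun l => Ideal.add_mem _ (ha l) (hb l), map_add _ _ _⟩
  have min1 : ∀ v, km1 v ∈ m ^ 2 → ∀ l, v l ∈ m := by
    intro v hv l
    obtain ⟨a, ha, hav⟩ := hsq _ hv
    obtain ⟨w, hw⟩ := ex1 (v - a) (by rw [map_sub, hav, sub_self])
    have : v = km2 w + a := by rw [hw]; abel
    rw [this]
    exact Ideal.add_mem _ (km2m w l) (ha l)
  have min2 : ∀ w, (∀ l, km2 w l ∈ m ^ 2) → ∀ l, w l ∈ m := by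
    intro w hw
    have e0 := hw 0
    have e2 := hw 2
    rw [hkm2] at e0 e2
    simp only [if_true] at e0
    have f0 := min1 ![0, - w 2, - w 1] (by rw [hkm1]; convert e0 using 1; simp; ring)
    have f2 := min1 ![w 1, w 0, 0] (by rw [hkm1]; convert e2 using 1; simp; ring)
    intro l
    fin_cases l
    · simpa using f2 1
    · simpa using f2 0
    · simpa using f0 1
  have min3 : ∀ r, (∀ l, km3 r l ∈ m ^ 2) → r ∈ m := by
    intro r hr
    have e0 := hr 0
    rw [hkm3] at e0
    have f0 := min1 ![r, 0, 0] (by rw [hkm1]; convert e0 using 1; simp)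
    simpa using f0 0
  have hm21 : m ^ 2 ≤ m := Ideal.pow_le_self two_ne_zero
  -- (a)
  have ha : ∀ (u v : F1' × (Fin t → R)) (i : Fin t),
      q1 i (μ11 u v) ∈ m • (⊤ : Submodule R (Fin 3 → R)) := by
    intro u v i
    rw [aux_vec_mem]
    apply min1
    rw [hq1, hFleib1]
    exact Ideal.sub_mem _ (Ideal.mul_mem_right _ _ (hI2 u)) (Ideal.mul_mem_right _ _ (hI2 v))
  have hb : ∀ (u : F1' × (Fin t → R)) (w : F2) (i : Fin t),
      q2 i (μ12 u w) ∈ m • (⊤ : Submodule R (Fin 3 → R)) := by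
    intro u w i
    rw [aux_vec_mem]
    apply min2
    rw [← aux_vec_mem, hq2, hFleib2, map_sub, map_smul]
    refine Submodule.sub_mem _ (Submodule.smul_mem_smul (hI2 u) trivial) ?_
    rw [pow_two]
    exact aux_map_mem m m ((q1 i).comp (μ11 u)) (fun y => ha u y i) (hminF2 w)
  refine ⟨ha, hb, ?_⟩
  -- the projection `π`
  obtain ⟨π, hπ⟩ : ∃ π : (F1' × (∀ _ : Fin t, Fin 3 → R)) →ₗ[R] (F1' × (Fin t → R)),
      ∀ z, π z = (z.1, fun i => - km1 (z.2 i)) := by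
    refine ⟨{ toFun := fun z => (z.1, fun i => - km1 (z.2 i)), map_add' := ?_, map_smul' := ?_ },
      fun _ => rfl⟩
    · intro a b
      ext i
      · simp
      · simp; ring
    · intro r a
      ext i
      · simp
      · simp
  have hπf : ∀ f : F1', π (f, 0) = (f, 0) := by
    intro f; rw [hπ]; ext <;> simp
  have hπg : ∀ g, π (0, g) ∈ m • (⊤ : Submodule R (F1' × (Fin t → R))) := by
    intro g
    rw [hπ]
    refine aux_prod_mem m (Submodule.zero_mem _) ?_
    rw [aux_vec_mem]
    exact fun i => neg_mem (km1m _)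
  have hπs : ∀ i (g : Fin 3 → R), π (0, Pi.single i g) = (-(km1 g)) • (0, Pi.single i 1) := by
    intro i g
    rw [hπ]
    ext j
    · simp
    · by_cases h : j = i
      · subst h; simp
      · simp [h]
  have hl1 : ∀ z, Tl1 d1 (fun _ => km1) z = d1 (π z) := by
    intro z
    have e : π z = (z.1, 0) + ∑ i, (-(km1 (z.2 i))) • ((0 : F1'), (Pi.single i (1:R) : Fin t → R)) := by
      rw [hπ]
      ext j
      · simp [Prod.fst_sum]
      · simp [Prod.snd_sum, Finset.sum_apply, Pi.single_apply]
    rw [e, map_add, map_sum]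
    simp only [map_smul]
    simp [Tl1, sub_eq_add_neg]
  have hl1m : ∀ z, Tl1 d1 (fun _ => km1) z ∈ m ^ 2 := fun z => by rw [hl1]; exact hI2 _
  -- linear versions of the differentials
  obtain ⟨l2, hl2⟩ : ∃ l2 : (F2 × (∀ _ : Fin t, Fin 3 → R)) →ₗ[R]
      (F1' × (∀ _ : Fin t, Fin 3 → R)), ∀ w, l2 w = Tl2 d2 q1 (fun _ => km2) w := by
    refine ⟨{ toFun := Tl2 d2 q1 (fun _ => km2), map_add' := ?_, map_smul' := ?_ },
      fun _ => rfl⟩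
    · intro a b
      refine Prod.ext ?_ ?_
      · simp [Tl2]
      · funext i; simp only [Tl2, Prod.fst_add, Prod.snd_add, Pi.add_apply, map_add]; abel
    · intro r a
      refine Prod.ext ?_ ?_
      · simp [Tl2]
      · funext i
        simp only [Tl2, Prod.smul_fst, Prod.smul_snd, Pi.smul_apply, map_smul, RingHom.id_apply]
        module
  obtain ⟨l3, hl3⟩ : ∃ l3 : (F3 × (∀ _ : Fin t, R)) →ₗ[R]
      (F2 × (∀ _ : Fin t, Fin 3 → R)), ∀ w, l3 w = Tl3 d3 q2 (fun _ => km3) w := by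
    refine ⟨{ toFun := Tl3 d3 q2 (fun _ => km3), map_add' := ?_, map_smul' := ?_ },
      fun _ => rfl⟩
    · intro a b
      refine Prod.ext ?_ ?_
      · simp [Tl3]
      · funext i; simp only [Tl3, Prod.fst_add, Prod.snd_add, Pi.add_apply, map_add]; abel
    · intro r a
      refine Prod.ext ?_ ?_
      · simp [Tl3]
      · funext i
        simp only [Tl3, Prod.smul_fst, Prod.smul_snd, Pi.smul_apply, map_smul, RingHom.id_apply]
        module
  obtain ⟨l1, hl1'⟩ : ∃ l1 : (F1' × (∀ _ : Fin t, Fin 3 → R)) →ₗ[R] R,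
      ∀ z, l1 z = Tl1 d1 (fun _ => km1) z := ⟨d1.comp π, fun z => by rw [hl1]; rfl⟩
  have hl1π : ∀ z, l1 z = d1 (π z) := fun z => by rw [hl1', hl1]
  have d12 : ∀ w, d1 (d2 w) = 0 := fun w =>
    LinearMap.mem_ker.1 (hFres1 ▸ LinearMap.mem_range_self d2 w)
  have hπl2 : ∀ w, π (l2 w) = d2 w.1 := by
    intro w
    rw [hl2, hπ]
    ext i
    · simp [Tl2]
    · simp [Tl2, k12zero, hq1]
  have l12 : ∀ w, l1 (l2 w) = 0 := by
    intro w
    rw [hl1π, hπl2, d12]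
  have l3inj : Function.Injective l3 := by
    rw [injective_iff_map_eq_zero]
    intro u hu
    rw [hl3] at hu
    have h1 : d3 u.1 = 0 := congrArg Prod.fst hu
    have h1' : u.1 = 0 := by
      have : u.1 ∈ LinearMap.ker d3 := h1
      rw [hFres3] at this
      simpa using this
    have h2 : ∀ i, q2 i u.1 + km3 (u.2 i) = 0 := fun i => congrFun (congrArg Prod.snd hu) i
    refine Prod.ext h1' ?_
    funext i
    apply k3inj
    simpa [h1'] using h2 i
  have l2ex : ∀ w, l2 w = 0 → ∃ u, l3 u = w := by
    intro w hw
    have hd : d2 w.1 = 0 := by rw [← hπl2, hw, map_zero]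
    have : w.1 ∈ LinearMap.range d3 := by rw [← hFres2]; exact hd
    obtain ⟨u, hu⟩ := this
    rw [hl2] at hw
    have h2 : ∀ i, - q1 i w.1 + km2 (w.2 i) = 0 := fun i => congrFun (congrArg Prod.snd hw) i
    have h3 : ∀ i, ∃ r, km3 r = w.2 i - q2 i u := by
      intro i
      apply ex2
      rw [map_sub, hq2, hu, sub_eq_neg_add]
      exact h2 i
    choose r hr using h3
    refine ⟨(u, r), ?_⟩
    rw [hl3]
    refine Prod.ext hu ?_
    funext i
    simp [Tl3, hr]
  -- the `K₂`-components of the product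
  have hG : ∀ j : Fin t, ∃ G : (F1' × (∀ _ : Fin t, Fin 3 → R)) →ₗ[R]
      (F1' × (∀ _ : Fin t, Fin 3 → R)) →ₗ[R] (Fin 3 → R),
      (∀ z, G z z = 0) ∧
      (∀ z z', km2 (G z z') = q1 j (μ11 (π z) (π z')) + d1 (π z) • z'.2 j - d1 (π z') • z.2 j) ∧
      (∀ i g g', G (0, Pi.single i g) (0, Pi.single i g') =
        (Pi.single i (-(d1 (0, Pi.single i 1) • k11 g g')) : Fin t → Fin 3 → R) j) ∧
      (∀ f g, G (f, 0) (0, g) ∈ m • (⊤ : Submodule R (Fin 3 → R))) ∧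
      (∀ g g', G (0, g) (0, g') ∈ m ^ 2 • (⊤ : Submodule R (Fin 3 → R))) := by
    intro j
    set e : F1' × (Fin t → R) := (0, Pi.single j 1) with he
    obtain ⟨ρ, hρ⟩ : ∃ ρ : (F1' × (Fin t → R)) →ₗ[R] (F1' × (Fin t → R)),
        ∀ a, ρ a = a - a.2 j • e :=
      ⟨LinearMap.id - ((LinearMap.proj j).comp (LinearMap.snd R F1' (Fin t → R))).smulRight e,
        fun a => rfl⟩
    have hρj : ∀ a, (ρ a).2 j = 0 := by
      intro a; rw [hρ, he]; simp
    obtain ⟨L, hLa, hL⟩ := aux_alt_lift km2 ((μ11.compl₁₂ ρ ρ).compr₂ (q1 j))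
      (by intro a; simp [hFalt])
      (by
        intro a b
        apply ex1
        simp [hq1, hFleib1, hρj])
    simp only [LinearMap.compr₂_apply, LinearMap.compl₁₂_apply] at hL
    obtain ⟨p, hp⟩ : ∃ p : (F1' × (Fin t → R)) →ₗ[R] (Fin 3 → R), ∀ a, p a = q1 j (μ11 a e) :=
      ⟨(q1 j).comp (μ11.flip e), fun a => rfl⟩
    have hpm : ∀ a, p a ∈ m • (⊤ : Submodule R (Fin 3 → R)) := fun a => by rw [hp]; exact ha _ _ _
    have hp1 : ∀ a, km1 (p a) = d1 a - d1 e * a.2 j := by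
      intro a; rw [hp, hq1, hFleib1, he]; simp
    have hLp : ∀ a b, km2 (L a b) = q1 j (μ11 a b) - b.2 j • p a + a.2 j • p b := by
      intro a b
      rw [hL, hρ, hρ, hp, hp]
      simp only [map_sub, map_smul, LinearMap.sub_apply, LinearMap.smul_apply, hFalt, map_zero]
      rw [hFskew e b, map_neg]
      module
    obtain ⟨s, hs⟩ : ∃ s : (F1' × (∀ _ : Fin t, Fin 3 → R)) →ₗ[R] (Fin 3 → R), ∀ z, s z = z.2 j :=
      ⟨(LinearMap.proj j).comp (LinearMap.snd R F1' _), fun a => rfl⟩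
    obtain ⟨G, hGd⟩ : ∃ G : (F1' × (∀ _ : Fin t, Fin 3 → R)) →ₗ[R]
      (F1' × (∀ _ : Fin t, Fin 3 → R)) →ₗ[R] (Fin 3 → R),
      ∀ z z', G z z' = L (π z) (π z') + k11 (p (π z)) (s z') - k11 (p (π z')) (s z)
        - d1 e • k11 (s z) (s z') :=
      ⟨L.compl₁₂ π π + k11.compl₁₂ (p.comp π) s - (k11.compl₁₂ (p.comp π) s).flip
        - d1 e • k11.compl₁₂ s s, fun z z' => rfl⟩
    refine ⟨G, ?_, ?_, ?_, ?_, ?_⟩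
    · intro z
      rw [hGd, hLa, kalt]; simp
    · intro z z'
      rw [hGd]
      simp only [map_add, map_sub, map_smul, kleib1, hLp, hp1, hs]
      have e1 : (π z).2 j = - km1 (z.2 j) := by rw [hπ]
      have e2 : (π z').2 j = - km1 (z'.2 j) := by rw [hπ]
      rw [e1, e2]
      module
    · intro i g g'
      rw [hGd, hπs, hπs, hs, hs]
      simp only [map_smul, LinearMap.smul_apply, hLa, smul_zero, zero_add]
      by_cases h : j = i
      · subst h
        simp [hp, ← he, hFalt]
      · simp [h]
    · intro f g
      rw [hGd, hs, hs]
      have e1 : L (π (f, 0)) (π (0, g)) ∈ m • (⊤ : Submodule R (Fin 3 → R)) :=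
        aux_map_mem' m (L (π (f, 0))) (hπg g)
      have e2 : k11 (p (π (f, 0))) (g j) ∈ m • (⊤ : Submodule R (Fin 3 → R)) :=
        aux_map_mem' m (k11.flip (g j)) (hpm _)
      simpa using Submodule.add_mem _ e1 e2
    · intro g g'
      rw [hGd, hs, hs]
      have e1 : L (π (0, g)) (π (0, g')) ∈ m ^ 2 • (⊤ : Submodule R (Fin 3 → R)) := by
        rw [pow_two]
        refine aux_map_mem m m (L.flip (π (0, g'))) (fun y => ?_) (hπg g)
        exact aux_map_mem' m (L y) (hπg g')
      have e2 : ∀ g v, k11 (p (π (0, g))) v ∈ m ^ 2 • (⊤ : Submodule R (Fin 3 → R)) := by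
        intro g v
        rw [pow_two]
        exact aux_map_mem m m ((k11.flip v).comp p)
          (fun y => aux_map_mem' m (k11.flip v) (hpm y)) (hπg g)
      exact Submodule.sub_mem _ (Submodule.sub_mem _ (Submodule.add_mem _ e1 (e2 _ _)) (e2 _ _))
        (Submodule.smul_mem_smul (hI2 _) trivial)
  choose G hGa hGm hG3 hGfg hGgg using hG
  have hGs : ∀ j z z', G j z z' = - G j z' z := by
    intro j a b
    have := hGa j (a + b)
    simp only [map_add, LinearMap.add_apply, hGa, zero_add, add_zero] at this
    rw [add_comm] at this
    exact eq_neg_of_add_eq_zero_left this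
  obtain ⟨t11, ht11⟩ : ∃ t11 : (F1' × (∀ _ : Fin t, Fin 3 → R)) →ₗ[R]
      (F1' × (∀ _ : Fin t, Fin 3 → R)) →ₗ[R] (F2 × (∀ _ : Fin t, Fin 3 → R)),
      ∀ z z', t11 z z' = (μ11 (π z) (π z'), fun j => G j z z') := by
    refine ⟨LinearMap.mk₂ R (fun z z' => (μ11 (π z) (π z'), fun j => G j z z')) ?_ ?_ ?_ ?_,
      fun _ _ => rfl⟩
    all_goals
      intros
      refine Prod.ext ?_ ?_
      · simp
      · funext i; simp
  have t11a : ∀ z, t11 z z = 0 := by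
    intro z; rw [ht11, hFalt]; simp only [hGa]; rfl
  have t11s : ∀ z z', t11 z z' = - t11 z' z := by
    intro z z'
    rw [ht11, ht11, hFskew]
    refine Prod.ext rfl ?_
    funext j
    exact hGs j z z'
  have t11leib : ∀ z z', l2 (t11 z z') = l1 z • z' - l1 z' • z := by
    intro z z'
    rw [hl2, ht11, hl1π, hl1π]
    refine Prod.ext ?_ ?_
    · simp only [Tl2, hFleib1]
      simp [hπ]
    · funext j
      simp only [Tl2, hGm]
      simp only [Prod.snd_sub, Prod.smul_snd, Pi.sub_apply, Pi.smul_apply]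
      abel
  obtain ⟨t12, ht12⟩ := aux_inj_lift l3 l3inj
    ((LinearMap.lsmul R (F2 × (∀ _ : Fin t, Fin 3 → R))).comp l1 - t11.compl₂ l2) (by
      intro z w
      apply l2ex
      simp [t11leib, l12])
  have ht12 : ∀ z w, l3 (t12 z w) = l1 z • w - t11 z (l2 w) := fun z w => ht12 z w
  have d3inj : Function.Injective d3 := LinearMap.ker_eq_bot.1 hFres3
  have t12F : ∀ z w, (t12 z w).1 = μ12 (π z) w.1 := by
    intro z w
    apply d3inj
    have h := congrArg Prod.fst (ht12 z w)
    rw [hl3, ht11, hl1π, hπl2] at h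
    rw [hFleib2]
    exact h
  have t12K : ∀ z w j, km3 ((t12 z w).2 j) =
      l1 z • w.2 j - G j z (l2 w) - q2 j (μ12 (π z) w.1) := by
    intro z w j
    have h := congrFun (congrArg Prod.snd (ht12 z w)) j
    rw [hl3, ht11] at h
    simp only [Tl3, t12F] at h
    rw [eq_sub_iff_add_eq, add_comm, h]
    rfl
  refine ⟨t11, t12, ⟨?_, t11a, t11s, ?_, ?_⟩, ⟨?_, ?_, ?_, ?_, ?_, ?_, ?_, ?_, ?_⟩, ?_, ?_⟩
  · intro z z'
    rw [← hl2, ← hl1', ← hl1']; exact t11leib z z'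
  · intro z w
    rw [← hl3, ← hl2, ← hl1']; exact ht12 z w
  · intro z z' z''
    apply l3inj
    rw [ht12, ht12, t11leib, t11leib, map_sub, map_sub, map_smul, map_smul, map_smul, map_smul,
      t11s z'' z', t11s z'' z]
    module
  · intro f f'
    refine ⟨fun j => G j (f, 0) (f', 0), fun j => ?_, ?_⟩
    · simp [hGm, hπf]
    · rw [ht11, hπf, hπf]
  · intro f i g
    refine ⟨fun j => G j (f, 0) (0, Pi.single i g), fun j => ?_, ?_⟩
    · rw [hGm, hπf, hπs, map_smul, hFskew]
      by_cases h : j = i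
      · subst h; simp
      · simp [h]
    · rw [ht11, hπf, hπs, map_smul, hFskew]
      simp
  · intro i g g'
    rw [ht11, hπs, hπs]
    refine Prod.ext ?_ ?_
    · simp only [map_smul, LinearMap.smul_apply, hFalt, smul_zero]
    · funext j
      exact hG3 j i g g'
  · intro i j hij g g'
    refine ⟨fun k => G k (0, Pi.single i g) (0, Pi.single j g'), fun k => ?_, ?_⟩
    · rw [hGm, hπs, hπs]
      simp only [map_smul, LinearMap.smul_apply]
      by_cases h : k = i
      · subst h; simp [hij.ne]; module
      · by_cases h' : k = j
        · subst h'; simp [h]; module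
        · simp [h, h']; module
    · rw [ht11, hπs, hπs]
      simp only [map_smul, LinearMap.smul_apply]
      refine Prod.ext ?_ rfl
      module
  · intro f w
    exact ⟨(t12 (f, 0) (w, 0)).2, Prod.ext (by rw [t12F, hπf]) rfl⟩
  · intro f i c
    exact ⟨(t12 (f, 0) (0, Pi.single i c)).2, Prod.ext (by rw [t12F, map_zero]) rfl⟩
  · intro i g c
    refine Prod.ext (by rw [t12F, map_zero]) ?_
    funext j
    rw [← sub_eq_zero]
    apply k3inj
    have e : l2 (0, Pi.single i c) = (0, Pi.single i (km2 c)) := by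
      rw [hl2]
      refine Prod.ext ?_ ?_
      · simp [Tl2]
      · funext k
        by_cases h : k = i
        · subst h; simp [Tl2]
        · simp [Tl2, h]
    rw [map_sub, t12K, e, hG3, hl1π, hπs]
    by_cases h : j = i
    · subst h
      simp only [Pi.single_eq_same, map_neg, map_smul, kleib2, map_zero]
      module
    · simp [h]
  · intro i j _ g c
    exact ⟨(t12 (0, Pi.single i g) (0, Pi.single j c)).2, Prod.ext (by rw [t12F, map_zero]) rfl⟩
  · intro i g w
    refine ⟨(t12 (0, Pi.single i g) (w, 0)).2, Prod.ext ?_ rfl⟩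
    rw [t12F, hπs, map_smul]; rfl
  · intro z z'
    have e : t11 z z' - t11 (z.1, 0) (z'.1, 0) =
        t11 (z.1, 0) (0, z'.2) - t11 (z'.1, 0) (0, z.2) + t11 (0, z.2) (0, z'.2) := by
      have h1 : z = (z.1, 0) + (0, z.2) := by ext <;> simp
      have h2 : z' = (z'.1, 0) + (0, z'.2) := by ext <;> simp
      have h3 : t11 z z' = t11 ((z.1, 0) + (0, z.2)) ((z'.1, 0) + (0, z'.2)) := by
        rw [← h1, ← h2]
      rw [h3]
      simp only [map_add, LinearMap.add_apply]
      rw [t11s (0, z.2) (z'.1, 0)]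
      abel
    rw [e]
    have A : ∀ f g, t11 (f, 0) (0, g) ∈
        m • (⊤ : Submodule R (F2 × (∀ _ : Fin t, Fin 3 → R))) := by
      intro f g
      rw [ht11]
      refine aux_prod_mem m (aux_map_mem' m (μ11 _) (hπg g)) ?_
      rw [aux_pi_mem]
      exact fun j => hGfg j f g
    refine Submodule.add_mem _ (Submodule.sub_mem _ (A _ _) (A _ _)) ?_
    rw [ht11]
    refine aux_prod_mem m (aux_map_mem' m (μ11 _) (hπg _)) ?_
    rw [aux_pi_mem]
    exact fun j => Submodule.smul_mono_left hm21 (hGgg j _ _)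
  · intro z w
    have hzπ : π z - π (z.1, 0) = π (0, z.2) := by
      rw [← map_sub]; congr 1; ext <;> simp
    have hF : ∀ y, μ12 (π z) y - μ12 (π (z.1, 0)) y = μ12 (π (0, z.2)) y := by
      intro y; rw [← hzπ, map_sub, LinearMap.sub_apply]
    refine aux_prod_mem m ?_ ?_
    · rw [Prod.fst_sub, t12F, t12F, hF]
      exact aux_map_mem' m (μ12.flip w.1) (hπg _)
    · rw [aux_vec_mem]
      intro j
      apply min3
      rw [← aux_vec_mem]
      rw [Prod.snd_sub, Pi.sub_apply, map_sub, t12K, t12K]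
      have e0 : l2 w - l2 (w.1, 0) = (0, fun i => km2 (w.2 i)) := by
        rw [hl2, hl2]
        refine Prod.ext ?_ ?_
        · simp [Tl2]
        · funext i; simp [Tl2]
      have e1 : G j z (l2 w) = G j (z.1, 0) (l2 (w.1, 0)) + G j (z.1, 0) (0, fun i => km2 (w.2 i))
          - G j ((l2 w).1, 0) (0, z.2) + G j (0, z.2) (0, (l2 w).2) := by
        have h1 : z = (z.1, 0) + (0, z.2) := by ext <;> simp
        have h2 : l2 w = ((l2 w).1, 0) + (0, (l2 w).2) := by ext <;> simp
        have h3 : G j z (l2 w) = G j (z.1, 0) (l2 w) + G j (0, z.2) (l2 w) := by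
          rw [← LinearMap.add_apply, ← map_add, ← h1]
        have h4 : G j (0, z.2) (l2 w) =
            G j (0, z.2) ((l2 w).1, 0) + G j (0, z.2) (0, (l2 w).2) := by
          rw [← map_add, ← h2]
        rw [h3, h4, ← e0, map_sub, hGs j (0, z.2) ((l2 w).1, 0)]
        abel
      have e2 : l1 z • w.2 j - G j z (l2 w) - (q2 j) (μ12 (π z) w.1) -
          (l1 (z.1, 0) • ((w.1, 0) : F2 × (∀ _ : Fin t, Fin 3 → R)).2 j
            - G j (z.1, 0) (l2 (w.1, 0)) - (q2 j) (μ12 (π (z.1, 0)) w.1)) =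
          l1 z • w.2 j - G j (z.1, 0) (0, fun i => km2 (w.2 i)) + G j ((l2 w).1, 0) (0, z.2)
            - G j (0, z.2) (0, (l2 w).2) - q2 j (μ12 (π (0, z.2)) w.1) := by
        rw [e1, ← hF, map_sub]
        simp only [Pi.zero_apply, smul_zero]
        abel
      refine Eq.subst (motive := fun y => y ∈ m ^ 2 • (⊤ : Submodule R (Fin 3 → R))) e2.symm ?_
      refine Submodule.sub_mem _ (Submodule.sub_mem _ (Submodule.add_mem _ (Submodule.sub_mem _
        ?_ ?_) ?_) (hGgg j _ _)) ?_
      · exact Submodule.smul_mem_smul (by rw [hl1']; exact hl1m z) trivial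
      · rw [pow_two]
        refine aux_map_mem m m ((G j (z.1, 0)).comp (LinearMap.inr R F1' (Fin t → Fin 3 → R)))
          (fun y => hGfg j _ y) (y := fun i => km2 (w.2 i)) ?_
        rw [aux_pi_mem]
        intro i
        rw [aux_vec_mem]
        exact km2m _
      · rw [pow_two]
        refine aux_map_mem m m (((G j).flip (0, z.2)).comp
          (LinearMap.inl R F1' (Fin t → Fin 3 → R))) (fun y => hGfg j y _) (y := (l2 w).1) ?_
        rw [hl2]
        exact aux_map_mem' m (LinearMap.fst R F1' (Fin t → R)) (hminF2 w.1)
      · rw [pow_two]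
        exact aux_map_mem m m ((q2 j).comp (μ12.flip w.1)) (fun y => hb y _ j) (hπg _)
end

section
/- Let (R, 𝔪, k) be a regular local ring of dimension 3, I = (φ_1, …, φ_n) with pd_R(R/I) = 3 of Tor-algebra class G(r), and F_• a minimal DG-algebra free resolution of R/I in standard form with F_1 ·_F F_1 ⊆ 𝔪² F_2. If moreover d_2(F_2) ⊆ 𝔪² F_1, then for every index set σ = (σ_1 < ⋯ < σ_t), the trimmed ideal tm_σ(I) defines a ring of Tor-algebra class G(r − |σ ∩ [r]|), where [r] = {1, …, r}. -/
open IsLocalRing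

section TorAlgebraClasses

open IsLocalRing

variable (R : Type) [CommRing R] [IsLocalRing R]

/-- The trimming operation on ideals: for `I = (φ 0, …, φ (n-1))` and an index set
`σ`, `tm_σ(I) = (φ i : i ∉ σ) + 𝔪·(φ j : j ∈ σ)`. -/
def trimIdeal {n : ℕ} (φ : Fin n → R) (σ : Finset (Fin n)) : Ideal R :=
  Ideal.span (φ '' {i | i ∉ σ}) ⊔ maximalIdeal R * Ideal.span (φ '' {i | i ∈ σ})

/-- `R/J` has projective dimension `3` and Tor-algebra class `G(r)`
(Avramov–Kustin–Miller normal form): encoded by the existence of a minimal free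
resolution `0 → R^{n3} → R^{n2} → R^{n1} → R` of `R/J` carrying an associative
DG-algebra structure whose induced multiplication on `Tor^R_•(R/J, k) = F̄_•`
is, with respect to the standard bases, in the `G(r)` normal form:
`f̄₁ⁱ f̄₂ⁱ = f̄₃¹` for `1 ≤ i ≤ r` and all other products of basis elements vanish. -/
def HasTorClassG (J : Ideal R) (r : ℕ) : Prop :=
  ∃ (n1 n2 n3 : ℕ) (h3 : 0 < n3), r ≤ n1 ∧ r ≤ n2 ∧
  ∃ (d1 : (Fin n1 → R) →ₗ[R] R) (d2 : (Fin n2 → R) →ₗ[R] (Fin n1 → R))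
    (d3 : (Fin n3 → R) →ₗ[R] (Fin n2 → R))
    (m11 : (Fin n1 → R) →ₗ[R] (Fin n1 → R) →ₗ[R] (Fin n2 → R))
    (m12 : (Fin n1 → R) →ₗ[R] (Fin n2 → R) →ₗ[R] (Fin n3 → R)),
    -- minimal free resolution of R/J
    LinearMap.range d1 = J ∧
    LinearMap.ker d1 = LinearMap.range d2 ∧
    LinearMap.ker d2 = LinearMap.range d3 ∧
    LinearMap.ker d3 = ⊥ ∧
    (∀ v, d1 v ∈ maximalIdeal R) ∧
    (∀ v, d2 v ∈ maximalIdeal R • (⊤ : Submodule R (Fin n1 → R))) ∧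
    (∀ v, d3 v ∈ maximalIdeal R • (⊤ : Submodule R (Fin n2 → R))) ∧
    -- DG-algebra axioms
    (∀ a b, d2 (m11 a b) = d1 a • b - d1 b • a) ∧
    (∀ a, m11 a a = 0) ∧ (∀ a b, m11 a b = - m11 b a) ∧
    (∀ a z, d3 (m12 a z) = d1 a • z - m11 a (d2 z)) ∧
    (∀ a b c, m12 c (m11 a b) = m12 a (m11 b c)) ∧
    -- G(r) normal form for the induced products on `F ⊗ k`
    (∀ a b : Fin n1, m11 (Pi.single a 1) (Pi.single b 1) ∈
      maximalIdeal R • (⊤ : Submodule R (Fin n2 → R))) ∧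
    (∀ (a : Fin n1) (b : Fin n2),
      m12 (Pi.single a 1) (Pi.single b 1) -
        (if (a : ℕ) = (b : ℕ) ∧ (a : ℕ) < r then Pi.single (⟨0, h3⟩ : Fin n3) 1 else 0) ∈
      maximalIdeal R • (⊤ : Submodule R (Fin n3 → R)))

/-- `R/J` has projective dimension `3` and Tor-algebra class `H(p,q)`:
`f̄₁^{p+1} f̄₁ⁱ = f̄₂ⁱ` for `1 ≤ i ≤ p`, `f̄₁^{p+1} f̄₂^{p+i} = f̄₃ⁱ` for `1 ≤ i ≤ q`,
and all other products of basis elements vanish (0-based indices below). -/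
def HasTorClassH (J : Ideal R) (p q : ℕ) : Prop :=
  ∃ (n1 n2 n3 : ℕ) (hp : p < n1) (hpq : p + q ≤ n2) (hq3 : q ≤ n3),
  ∃ (d1 : (Fin n1 → R) →ₗ[R] R) (d2 : (Fin n2 → R) →ₗ[R] (Fin n1 → R))
    (d3 : (Fin n3 → R) →ₗ[R] (Fin n2 → R))
    (m11 : (Fin n1 → R) →ₗ[R] (Fin n1 → R) →ₗ[R] (Fin n2 → R))
    (m12 : (Fin n1 → R) →ₗ[R] (Fin n2 → R) →ₗ[R] (Fin n3 → R)),
    LinearMap.range d1 = J ∧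
    LinearMap.ker d1 = LinearMap.range d2 ∧
    LinearMap.ker d2 = LinearMap.range d3 ∧
    LinearMap.ker d3 = ⊥ ∧
    (∀ v, d1 v ∈ maximalIdeal R) ∧
    (∀ v, d2 v ∈ maximalIdeal R • (⊤ : Submodule R (Fin n1 → R))) ∧
    (∀ v, d3 v ∈ maximalIdeal R • (⊤ : Submodule R (Fin n2 → R))) ∧
    (∀ a b, d2 (m11 a b) = d1 a • b - d1 b • a) ∧
    (∀ a, m11 a a = 0) ∧ (∀ a b, m11 a b = - m11 b a) ∧
    (∀ a z, d3 (m12 a z) = d1 a • z - m11 a (d2 z)) ∧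
    (∀ a b c, m12 c (m11 a b) = m12 a (m11 b c)) ∧
    -- H(p,q) normal form for the induced products on `F ⊗ k`
    (∀ b : Fin n1, ∀ hb : (b : ℕ) < p,
      m11 (Pi.single (⟨p, hp⟩ : Fin n1) 1) (Pi.single b 1) -
        Pi.single (⟨(b : ℕ), by omega⟩ : Fin n2) 1 ∈
      maximalIdeal R • (⊤ : Submodule R (Fin n2 → R))) ∧
    (∀ a b : Fin n1, ¬((a : ℕ) = p ∧ (b : ℕ) < p) → ¬((b : ℕ) = p ∧ (a : ℕ) < p) →
      m11 (Pi.single a 1) (Pi.single b 1) ∈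
        maximalIdeal R • (⊤ : Submodule R (Fin n2 → R))) ∧
    (∀ b : Fin n2, ∀ hb1 : p ≤ (b : ℕ), ∀ hb2 : (b : ℕ) < p + q,
      m12 (Pi.single (⟨p, hp⟩ : Fin n1) 1) (Pi.single b 1) -
        Pi.single (⟨(b : ℕ) - p, by omega⟩ : Fin n3) 1 ∈
      maximalIdeal R • (⊤ : Submodule R (Fin n3 → R))) ∧
    (∀ (a : Fin n1) (b : Fin n2), ¬((a : ℕ) = p ∧ p ≤ (b : ℕ) ∧ (b : ℕ) < p + q) →
      m12 (Pi.single a 1) (Pi.single b 1) ∈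
        maximalIdeal R • (⊤ : Submodule R (Fin n3 → R)))

/-- `R/J` is a Golod ring: in the grade-3 setting of the paper this is equivalent
(Avramov–Kustin–Miller) to the multiplication on `Tor_+^R(R/J,k)` being trivial,
which is how it is encoded here: some minimal free resolution of `R/J` of length `≤ 3`
carries a DG-algebra structure all of whose products lie in `𝔪 • F`. -/
def IsGolodQuotient (J : Ideal R) : Prop :=
  ∃ (n1 n2 n3 : ℕ)
    (d1 : (Fin n1 → R) →ₗ[R] R) (d2 : (Fin n2 → R) →ₗ[R] (Fin n1 → R))
    (d3 : (Fin n3 → R) →ₗ[R] (Fin n2 → R))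
    (m11 : (Fin n1 → R) →ₗ[R] (Fin n1 → R) →ₗ[R] (Fin n2 → R))
    (m12 : (Fin n1 → R) →ₗ[R] (Fin n2 → R) →ₗ[R] (Fin n3 → R)),
    LinearMap.range d1 = J ∧
    LinearMap.ker d1 = LinearMap.range d2 ∧
    LinearMap.ker d2 = LinearMap.range d3 ∧
    LinearMap.ker d3 = ⊥ ∧
    (∀ v, d1 v ∈ maximalIdeal R) ∧
    (∀ v, d2 v ∈ maximalIdeal R • (⊤ : Submodule R (Fin n1 → R))) ∧
    (∀ v, d3 v ∈ maximalIdeal R • (⊤ : Submodule R (Fin n2 → R))) ∧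
    (∀ a b, d2 (m11 a b) = d1 a • b - d1 b • a) ∧
    (∀ a, m11 a a = 0) ∧ (∀ a b, m11 a b = - m11 b a) ∧
    (∀ a z, d3 (m12 a z) = d1 a • z - m11 a (d2 z)) ∧
    (∀ a b c, m12 c (m11 a b) = m12 a (m11 b c)) ∧
    -- trivial Tor multiplication
    (∀ a b, m11 a b ∈ maximalIdeal R • (⊤ : Submodule R (Fin n2 → R))) ∧
    (∀ a z, m12 a z ∈ maximalIdeal R • (⊤ : Submodule R (Fin n3 → R)))

end TorAlgebraClasses

namespace TrimG

section basic
variable {R : Type} [CommRing R]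

lemma map_mem {M N : Type*} [AddCommGroup M] [Module R M] [AddCommGroup N] [Module R N]
    {I : Ideal R} (f : M →ₗ[R] N) {v : M} (h : v ∈ I • (⊤ : Submodule R M)) :
    f v ∈ I • (⊤ : Submodule R N) := by
  have h1 := Submodule.mem_map_of_mem (f := f) h
  rw [Submodule.map_smul''] at h1
  exact Submodule.smul_mono le_rfl le_top h1

lemma map_mem_mul {M N : Type*} [AddCommGroup M] [Module R M] [AddCommGroup N] [Module R N]
    {I K : Ideal R} (f : M →ₗ[R] N) (hf : ∀ v, f v ∈ K • (⊤ : Submodule R N)) {v : M}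
    (h : v ∈ I • (⊤ : Submodule R M)) :
    f v ∈ (I * K) • (⊤ : Submodule R N) := by
  have h1 := Submodule.mem_map_of_mem (f := f) h
  rw [Submodule.map_smul''] at h1
  rw [Submodule.mul_smul]
  refine Submodule.smul_mono le_rfl ?_ h1
  rintro _ ⟨y, -, rfl⟩
  exact hf y

lemma mem_prod {M N : Type*} [AddCommGroup M] [Module R M] [AddCommGroup N] [Module R N]
    {I : Ideal R} {v : M × N} (h1 : v.1 ∈ I • (⊤ : Submodule R M))
    (h2 : v.2 ∈ I • (⊤ : Submodule R N)) : v ∈ I • (⊤ : Submodule R (M × N)) := by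
  have : v = LinearMap.inl R M N v.1 + LinearMap.inr R M N v.2 := by simp
  rw [this]
  exact add_mem (map_mem _ h1) (map_mem _ h2)

lemma mem_pi_iff {ι : Type*} [Finite ι] {I : Ideal R} {v : ι → R} :
    v ∈ I • (⊤ : Submodule R (ι → R)) ↔ ∀ i, v i ∈ I := by
  classical
  have := Fintype.ofFinite ι
  constructor
  · intro h i
    have := map_mem (LinearMap.proj (R := R) (φ := fun _ : ι => R) i) h
    simpa using this
  · intro h
    have : v = ∑ i, v i • (Pi.single i (1 : R) : ι → R) := by
      ext j; simp [Finset.sum_apply, Pi.single_apply]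
    rw [this]
    exact sum_mem fun i _ => Submodule.smul_mem_smul (h i) trivial

lemma mem_pi2_iff {ι κ : Type*} [Finite ι] [Finite κ] {I : Ideal R} {v : ι → κ → R} :
    v ∈ I • (⊤ : Submodule R (ι → κ → R)) ↔ ∀ i j, v i j ∈ I := by
  classical
  have := Fintype.ofFinite ι
  constructor
  · intro h i
    have := map_mem (LinearMap.proj (R := R) (φ := fun _ : ι => κ → R) i) h
    exact mem_pi_iff.1 this
  · intro h
    have : v = ∑ i, LinearMap.single R (fun _ : ι => κ → R) i (v i) := by
      ext j k; simp [Finset.sum_apply, Pi.single_apply, ite_apply]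
    rw [this]
    exact sum_mem fun i _ => map_mem _ (mem_pi_iff.2 (h i))

/-- lifting along a map, with control on basis elements -/
lemma exists_lift {ι F M N : Type*} [AddCommGroup F] [Module R F]
    [AddCommGroup M] [Module R M] [AddCommGroup N] [Module R N] (b : Module.Basis ι R F)
    (f : F →ₗ[R] N) (g : M →ₗ[R] N) (P : ι → M → Prop)
    (h : ∀ i, ∃ u, g u = f (b i) ∧ P i u) :
    ∃ l : F →ₗ[R] M, (∀ z, g (l z) = f z) ∧ ∀ i, P i (l (b i)) := by
  choose u hu hP using h
  refine ⟨b.constr R u, ?_, fun i => by simpa using hP i⟩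
  have : g ∘ₗ b.constr R u = f := b.ext fun i => by simp [hu]
  exact fun z => LinearMap.congr_fun this z

lemma mem_of_basis {ι F M : Type*} [AddCommGroup F] [Module R F]
    [AddCommGroup M] [Module R M] (b : Module.Basis ι R F) (f : F →ₗ[R] M) (P : Submodule R M)
    (h : ∀ i, f (b i) ∈ P) (z : F) : f z ∈ P := by
  have : (⊤ : Submodule R F) ≤ P.comap f := by
    rw [← b.span_eq, Submodule.span_le]
    rintro _ ⟨i, rfl⟩
    exact h i
  exact this trivial

/-- bilinear lifting -/
lemma exists_lift2 {ι κ F F' M N : Type*} [AddCommGroup F] [Module R F]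
    [AddCommGroup F'] [Module R F']
    [AddCommGroup M] [Module R M] [AddCommGroup N] [Module R N]
    (b : Module.Basis ι R F) (b' : Module.Basis κ R F')
    (f : F →ₗ[R] F' →ₗ[R] N) (g : M →ₗ[R] N)
    (h : ∀ i j, ∃ u, g u = f (b i) (b' j)) :
    ∃ l : F →ₗ[R] F' →ₗ[R] M, ∀ z w, g (l z w) = f z w := by
  obtain ⟨l, hl, -⟩ := exists_lift b f (LinearMap.llcomp R F' M N g) (fun _ _ => True) (by
    intro i
    obtain ⟨l, hl, -⟩ := exists_lift b' (f (b i)) g (fun _ _ => True)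
      (fun j => (h i j).imp fun u hu => ⟨hu, trivial⟩)
    exact ⟨l, LinearMap.ext hl, trivial⟩)
  exact ⟨l, fun z w => LinearMap.congr_fun (hl z) w⟩

/-- lifting of alternating bilinear maps -/
lemma exists_lift_alt {ι F M N : Type*} [Fintype ι] [AddCommGroup F] [Module R F]
    [AddCommGroup M] [Module R M] [AddCommGroup N] [Module R N] (b : Module.Basis ι R F)
    (c : F →ₗ[R] F →ₗ[R] N) (hc : ∀ z, c z z = 0) (g : M →ₗ[R] N) (P : Submodule R M)
    (h : ∀ z w, ∃ u ∈ P, g u = c z w) :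
    ∃ v : F →ₗ[R] F →ₗ[R] M, (∀ z, v z z = 0) ∧ (∀ z w, g (v z w) = c z w) ∧
      ∀ z w, v z w ∈ P := by
  classical
  let e := Fintype.equivFin ι
  choose u hu hg using h
  have hc' : ∀ z w, c z w = - c w z := by
    intro z w
    have := hc (z + w)
    simp only [map_add, LinearMap.add_apply, hc, zero_add, add_zero] at this
    exact eq_neg_of_add_eq_zero_right this
  let t : ι → ι → M := fun i j => if e i < e j then u (b i) (b j) else
    if e j < e i then - u (b j) (b i) else 0
  have ht : ∀ i j, t i j + t j i = 0 := by
    intro i j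
    rcases lt_trichotomy (e i) (e j) with h | h | h
    · simp [t, h, h.not_gt]
    · simp [t, h]
    · simp [t, h, h.not_gt]
  have htt : ∀ i, t i i = 0 := by intro i; simp [t]
  have htg : ∀ i j, g (t i j) = c (b i) (b j) := by
    intro i j
    rcases lt_trichotomy (e i) (e j) with h | h | h
    · simp [t, h, hg]
    · have : i = j := e.injective h
      subst this; simp [t, hc]
    · simp [t, h, h.not_gt, hg, hc' (b i) (b j)]
  have htP : ∀ i j, t i j ∈ P := by
    intro i j
    simp only [t]; split_ifs
    · exact hu _ _
    · exact neg_mem (hu _ _)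
    · exact zero_mem _
  let v : F →ₗ[R] F →ₗ[R] M := b.constr R fun i => b.constr R fun j => t i j
  have hv : ∀ i j, v (b i) (b j) = t i j := by intro i j; simp [v]
  have hvs : ∀ z w, v z w = ∑ p : ι × ι, (b.repr z p.1 * b.repr w p.2) • t p.1 p.2 := by
    intro z w
    conv_lhs => rw [← b.sum_repr z, ← b.sum_repr w]
    simp only [map_sum, LinearMap.sum_apply, map_smul, LinearMap.smul_apply, hv]
    rw [Fintype.sum_prod_type]
    simp only [mul_smul, Finset.smul_sum]
    rw [Finset.sum_comm]
    refine Finset.sum_congr rfl fun i _ => Finset.sum_congr rfl fun j _ => ?_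
    rw [smul_comm]
  refine ⟨v, ?_, ?_, ?_⟩
  · intro z
    rw [hvs]
    refine Finset.sum_involution (fun p _ => p.swap) ?_ ?_ (by simp) (by simp)
    · rintro ⟨i, j⟩ -
      simp only [Prod.swap]
      rw [mul_comm (b.repr z j), ← smul_add, ht, smul_zero]
    · rintro ⟨i, j⟩ - hne heq
      simp only [Prod.swap_prod_mk, Prod.mk.injEq] at heq
      apply hne
      simp [heq.1, htt]
  · intro z w
    have : (LinearMap.llcomp R F M N g) ∘ₗ v = c := b.ext fun i => b.ext fun j => by
      simp [hv, htg]
    exact LinearMap.congr_fun (LinearMap.congr_fun this z) w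
  · intro z w
    rw [hvs]
    exact sum_mem fun p _ => P.smul_mem _ (htP _ _)

end basic

section koszul
variable {R : Type} [CommRing R] (x : Fin 3 → R) (S : Type)

/-- First Koszul differential (direct sum of copies indexed by `S`). -/
def dK1 : (S → Fin 3 → R) →ₗ[R] (S → R) where
  toFun u s := x 0 * u s 0 + x 1 * u s 1 + x 2 * u s 2
  map_add' u v := by ext s; simp; ring
  map_smul' c v := by ext s; simp; ring

/-- Second Koszul differential. -/
def dK2 : (S → Fin 3 → R) →ₗ[R] (S → Fin 3 → R) where
  toFun u s := ![x 1 * u s 2 - x 2 * u s 1, x 2 * u s 0 - x 0 * u s 2, x 0 * u s 1 - x 1 * u s 0]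
  map_add' u v := by ext s j; fin_cases j <;> simp <;> ring
  map_smul' c v := by ext s j; fin_cases j <;> simp <;> ring

/-- Third Koszul differential. -/
def dK3 : (S → R) →ₗ[R] (S → Fin 3 → R) where
  toFun t s j := x j * t s
  map_add' u v := by ext s j; simp; ring
  map_smul' c v := by ext s j; simp; ring

variable {x}

lemma reg_facts (hreg : RingTheory.Sequence.IsRegular R [x 0, x 1, x 2]) :
    (∀ c, x 0 * c = 0 → c = 0) ∧ (∀ c d, x 1 * c = x 0 * d → ∃ e, c = x 0 * e) ∧
    (∀ c d e, x 2 * c = x 0 * d + x 1 * e → ∃ p q, c = x 0 * p + x 1 * q) := by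
  have h := hreg.toIsWeaklyRegular.regular_mod_prev
  have h0 := (isSMulRegular_quotient_iff_mem_of_smul_mem _ _).1 (h 0 (by simp))
  have h1 := (isSMulRegular_quotient_iff_mem_of_smul_mem _ _).1 (h 1 (by simp))
  have h2 := (isSMulRegular_quotient_iff_mem_of_smul_mem _ _).1 (h 2 (by simp))
  simp [Ideal.ofList] at h0 h1 h2
  refine ⟨fun c hc => h0 c hc, fun c d hcd => ?_, fun c d e hcd => ?_⟩
  · have := h1 c (by
      simpa [Ideal.mem_span_singleton] using ⟨d, hcd⟩)
    simpa [Ideal.mem_span_singleton, dvd_def] using this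
  · have hset : {r | r = x 0 ∨ r = x 1} = ({x 0, x 1} : Set R) := by ext; simp
    rw [hset] at h2
    have := h2 c (Ideal.mem_span_pair.2 ⟨d, e, by rw [hcd]; ring⟩)
    rw [Ideal.mem_span_pair] at this
    obtain ⟨p, q, h⟩ := this
    exact ⟨p, q, by rw [← h]; ring⟩

variable {S}

@[simp] lemma dK1_dK2 (u : S → Fin 3 → R) : dK1 x S (dK2 x S u) = 0 := by
  ext s; simp [dK1, dK2]; ring

@[simp] lemma dK2_dK3 (t : S → R) : dK2 x S (dK3 x S t) = 0 := by
  ext s j; fin_cases j <;> simp [dK2, dK3] <;> ring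

lemma dK1_exact (hreg : RingTheory.Sequence.IsRegular R [x 0, x 1, x 2])
    (u : S → Fin 3 → R) (h : dK1 x S u = 0) : ∃ y, dK2 x S y = u := by
  obtain ⟨h0, h1, h2⟩ := reg_facts hreg
  have key : ∀ s, ∃ y : Fin 3 → R, x 1 * y 2 - x 2 * y 1 = u s 0 ∧ x 2 * y 0 - x 0 * y 2 = u s 1 ∧
      x 0 * y 1 - x 1 * y 0 = u s 2 := by
    intro s
    have hs : x 0 * u s 0 + x 1 * u s 1 + x 2 * u s 2 = 0 := congrFun h s
    obtain ⟨p, q, hpq⟩ := h2 (u s 2) (-u s 0) (-u s 1) (by linear_combination hs)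
    obtain ⟨w, hw⟩ := h1 (u s 1 + x 2 * q) (-(u s 0 + x 2 * p)) (by
      rw [hpq] at hs; linear_combination hs)
    have h3 := h0 (u s 0 + x 2 * p + x 1 * w) (by
      rw [hpq] at hs; linear_combination hs - x 1 * hw)
    refine ⟨![-q, p, -w], ?_, ?_, ?_⟩ <;> simp
    · linear_combination -h3
    · linear_combination -hw
    · linear_combination -hpq
  choose y hy using key
  refine ⟨y, ?_⟩
  ext s j
  fin_cases j
  · exact (hy s).1
  · exact (hy s).2.1
  · exact (hy s).2.2

lemma dK2_exact (hreg : RingTheory.Sequence.IsRegular R [x 0, x 1, x 2])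
    (u : S → Fin 3 → R) (h : dK2 x S u = 0) : ∃ t, dK3 x S t = u := by
  obtain ⟨h0, h1, h2⟩ := reg_facts hreg
  have key : ∀ s, ∃ c, ∀ j, x j * c = u s j := by
    intro s
    have e1 : x 2 * u s 0 - x 0 * u s 2 = 0 := congrFun (congrFun h s) 1
    have e2 : x 0 * u s 1 - x 1 * u s 0 = 0 := congrFun (congrFun h s) 2
    obtain ⟨c, hc⟩ := h1 (u s 0) (u s 1) (by linear_combination -e2)
    have a1 := h0 (u s 1 - x 1 * c) (by rw [hc] at e2; linear_combination e2)
    have a2 := h0 (u s 2 - x 2 * c) (by rw [hc] at e1; linear_combination -e1)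
    refine ⟨c, fun j => ?_⟩
    fin_cases j
    · exact hc.symm
    · exact (sub_eq_zero.1 a1).symm
    · exact (sub_eq_zero.1 a2).symm
  choose t ht using key
  exact ⟨t, by ext s j; exact ht s j⟩

lemma dK3_inj (hreg : RingTheory.Sequence.IsRegular R [x 0, x 1, x 2])
    (t : S → R) (h : dK3 x S t = 0) : t = 0 := by
  obtain ⟨h0, h1, h2⟩ := reg_facts hreg
  ext s
  exact h0 _ (congrFun (congrFun h s) 0)

variable [IsLocalRing R]

lemma x_mem (hx : Ideal.span {x 0, x 1, x 2} = maximalIdeal R)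
    (j : Fin 3) : x j ∈ maximalIdeal R := by
  rw [← hx]; apply Ideal.subset_span; fin_cases j <;> simp

lemma sq_lift (hx : Ideal.span {x 0, x 1, x 2} = maximalIdeal R)
    (c : R) (hc : c ∈ maximalIdeal R ^ 2) :
    ∃ u : Fin 3 → R, (∀ j, u j ∈ maximalIdeal R) ∧ x 0 * u 0 + x 1 * u 1 + x 2 * u 2 = c := by
  rw [pow_two] at hc
  refine Submodule.mul_induction_on hc ?_ ?_
  · intro m hm n hn
    rw [← hx, Ideal.mem_span_insert] at hm
    obtain ⟨a, z, hz, rfl⟩ := hm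
    obtain ⟨b, c, rfl⟩ := Ideal.mem_span_pair.1 hz
    refine ⟨fun j => ![a, b, c] j * n, fun j => Ideal.mul_mem_left _ _ hn, ?_⟩
    simp; ring
  · rintro c d ⟨u, hu, rfl⟩ ⟨v, hv, rfl⟩
    exact ⟨u + v, fun j => add_mem (hu j) (hv j), by simp; ring⟩

lemma dK1_lift (hx : Ideal.span {x 0, x 1, x 2} = maximalIdeal R)
    (w : S → R) (hw : ∀ s, w s ∈ maximalIdeal R ^ 2) :
    ∃ u, dK1 x S u = w ∧ ∀ s j, u s j ∈ maximalIdeal R := by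
  choose u hu hw' using fun s => sq_lift hx (w s) (hw s)
  exact ⟨u, by ext s; exact hw' s, hu⟩

lemma coeff_mem (hreg : RingTheory.Sequence.IsRegular R [x 0, x 1, x 2])
    (hx : Ideal.span {x 0, x 1, x 2} = maximalIdeal R)
    (c : Fin 3 → R) (hc : x 0 * c 0 + x 1 * c 1 + x 2 * c 2 ∈ maximalIdeal R ^ 2) (j) :
    c j ∈ maximalIdeal R := by
  obtain ⟨u, hu, h⟩ := sq_lift hx _ hc
  obtain ⟨y, hy⟩ := dK1_exact hreg (S := Unit) (fun _ => c - u) (by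
    ext s; simp [dK1]; linear_combination -h)
  have h1 : c j = u j + dK2 x Unit y () j := by rw [hy]; simp
  rw [h1]
  refine add_mem (hu j) ?_
  have hxm := x_mem hx
  fin_cases j <;> simp [dK2] <;>
    exact sub_mem (Ideal.mul_mem_right _ _ (hxm _)) (Ideal.mul_mem_right _ _ (hxm _))

lemma dK2_mem (hreg : RingTheory.Sequence.IsRegular R [x 0, x 1, x 2])
    (hx : Ideal.span {x 0, x 1, x 2} = maximalIdeal R)
    (u : S → Fin 3 → R) (h : ∀ s j, dK2 x S u s j ∈ maximalIdeal R ^ 2) (s j) :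
    u s j ∈ maximalIdeal R := by
  have a0 := coeff_mem hreg hx ![0, - u s 2, u s 1] (by
    have := neg_mem (h s 0); simp [dK2] at this ⊢; convert this using 1; ring)
  have a1 := coeff_mem hreg hx ![u s 2, 0, - u s 0] (by
    have := neg_mem (h s 1); simp [dK2] at this ⊢; convert this using 1; ring)
  fin_cases j
  · simpa using a1 2
  · exact a0 2
  · exact a1 0

lemma dK3_mem (hreg : RingTheory.Sequence.IsRegular R [x 0, x 1, x 2])
    (hx : Ideal.span {x 0, x 1, x 2} = maximalIdeal R)
    (t : S → R) (h : ∀ s j, dK3 x S t s j ∈ maximalIdeal R ^ 2) (s) :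
    t s ∈ maximalIdeal R := by
  exact coeff_mem hreg hx ![t s, 0, 0] (by
    have := h s 0; simpa [dK3] using this) 0

end koszul
end TrimG

namespace TrimG

lemma exists_equiv_ext {ι : Type*} [Fintype ι] {r : ℕ} (e : Fin r ↪ ι) :
    ∃ E : ι ≃ Fin (Fintype.card ι), ∀ k, (E (e k) : ℕ) = k := by
  classical
  have hr : r ≤ Fintype.card ι := by simpa using Fintype.card_le_of_embedding e
  let f : Fin (Fintype.card ι) → ι := fun i => if h : (i : ℕ) < r then e ⟨i, h⟩ else
    (Fintype.equivFin ι).symm i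
  obtain ⟨g, hg⟩ := Finset.exists_equiv_extend_of_card_eq (α := Fin (Fintype.card ι))
    (t := (Finset.univ : Finset ι)) (by simp) (s := Finset.univ.filter fun i => (i : ℕ) < r) (f := f)
    (by simp) (by
      intro i hi j hj h
      have hi' : (i : ℕ) < r := by simpa using hi
      have hj' : (j : ℕ) < r := by simpa using hj
      simp only [f, hi', hj', dif_pos] at h
      have := e.injective h
      simpa [Fin.ext_iff] using this)
  refine ⟨(g.trans (Equiv.subtypeUnivEquiv (by simp))).symm, fun k => ?_⟩
  have h1 := hg ⟨k, k.2.trans_le hr⟩ (by simp)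
  have h2 : (g.trans (Equiv.subtypeUnivEquiv (by simp))) ⟨k, k.2.trans_le hr⟩ = e k := by
    simp only [Equiv.trans_apply, Equiv.subtypeUnivEquiv_apply, h1]
    simp [f]
  rw [← h2, Equiv.symm_apply_apply]

lemma transport {R : Type} [CommRing R] [IsLocalRing R] (J : Ideal R) (r : ℕ)
    {G1 G2 G3 : Type} [AddCommGroup G1] [Module R G1] [AddCommGroup G2] [Module R G2]
    [AddCommGroup G3] [Module R G3] {ι1 ι2 ι3 : Type} [Fintype ι1] [Fintype ι2] [Fintype ι3]
    (b1 : Module.Basis ι1 R G1) (b2 : Module.Basis ι2 R G2) (b3 : Module.Basis ι3 R G3)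
    (o : ι3) (e1 : Fin r ↪ ι1) (e2 : Fin r ↪ ι2)
    (D1 : G1 →ₗ[R] R) (D2 : G2 →ₗ[R] G1) (D3 : G3 →ₗ[R] G2)
    (M11 : G1 →ₗ[R] G1 →ₗ[R] G2) (M12 : G1 →ₗ[R] G2 →ₗ[R] G3)
    (h1 : LinearMap.range D1 = J)
    (h2 : LinearMap.ker D1 = LinearMap.range D2)
    (h3 : LinearMap.ker D2 = LinearMap.range D3)
    (h4 : LinearMap.ker D3 = ⊥)
    (h5 : ∀ v, D1 v ∈ maximalIdeal R)
    (h6 : ∀ v, D2 v ∈ maximalIdeal R • (⊤ : Submodule R G1))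
    (h7 : ∀ v, D3 v ∈ maximalIdeal R • (⊤ : Submodule R G2))
    (h8 : ∀ a b, D2 (M11 a b) = D1 a • b - D1 b • a)
    (h9 : ∀ a, M11 a a = 0)
    (h10 : ∀ a z, D3 (M12 a z) = D1 a • z - M11 a (D2 z))
    (h11 : ∀ a b, M11 a b ∈ maximalIdeal R • (⊤ : Submodule R G2))
    (h12 : ∀ i j, (∀ k, ¬ (e1 k = i ∧ e2 k = j)) →
      M12 (b1 i) (b2 j) ∈ maximalIdeal R • (⊤ : Submodule R G3))
    (h13 : ∀ k, M12 (b1 (e1 k)) (b2 (e2 k)) - b3 o ∈ maximalIdeal R • (⊤ : Submodule R G3)) :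
    HasTorClassG R J r := by
  classical
  obtain ⟨E1, hE1⟩ := exists_equiv_ext e1
  obtain ⟨E2, hE2⟩ := exists_equiv_ext e2
  obtain ⟨E3, hE3⟩ := exists_equiv_ext (r := 1) ⟨fun _ => o, fun _ _ _ => Subsingleton.elim _ _⟩
  have h3pos : 0 < Fintype.card ι3 := Fintype.card_pos_iff.2 ⟨o⟩
  have hE3' : E3 o = ⟨0, h3pos⟩ := Fin.ext (hE3 0)
  let p1 := (b1.reindex E1).equivFun
  let p2 := (b2.reindex E2).equivFun
  let p3 := (b3.reindex E3).equivFun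
  have hp1 : ∀ i, p1.symm (Pi.single i 1) = b1 (E1.symm i) := by intro i; simp [p1]
  have hp2 : ∀ i, p2.symm (Pi.single i 1) = b2 (E2.symm i) := by intro i; simp [p2]
  have hp3 : p3 (b3 o) = Pi.single ⟨0, h3pos⟩ 1 := by
    rw [← LinearEquiv.eq_symm_apply, ← hE3']; simp [p3]
  have hskew : ∀ a b, M11 a b = - M11 b a := by
    intro z w
    have := h9 (z + w)
    simp only [map_add, LinearMap.add_apply, h9, zero_add, add_zero] at this
    exact eq_neg_of_add_eq_zero_right this
  have hinj : Function.Injective D3 := LinearMap.ker_eq_bot.1 h4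
  refine ⟨Fintype.card ι1, Fintype.card ι2, Fintype.card ι3, h3pos,
    by simpa using Fintype.card_le_of_embedding e1, by simpa using Fintype.card_le_of_embedding e2,
    D1 ∘ₗ p1.symm.toLinearMap, p1.toLinearMap ∘ₗ D2 ∘ₗ p2.symm.toLinearMap,
    p2.toLinearMap ∘ₗ D3 ∘ₗ p3.symm.toLinearMap,
    (M11.compl₁₂ p1.symm.toLinearMap p1.symm.toLinearMap).compr₂ p2.toLinearMap,
    (M12.compl₁₂ p1.symm.toLinearMap p2.symm.toLinearMap).compr₂ p3.toLinearMap,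
    ?_, ?_, ?_, ?_, ?_, ?_, ?_, ?_, ?_, ?_, ?_, ?_, ?_, ?_⟩
  · rw [LinearMap.range_comp_of_range_eq_top _ (LinearEquiv.range _), h1]
  · ext v
    have := SetLike.ext_iff.1 h2 (p1.symm v)
    simp only [LinearMap.mem_ker, LinearMap.mem_range] at this
    simp only [LinearMap.mem_ker, LinearMap.mem_range, LinearMap.comp_apply,
      LinearEquiv.coe_coe, this]
    constructor
    · rintro ⟨y, hy⟩
      exact ⟨p2 y, by simp [hy]⟩
    · rintro ⟨y, hy⟩
      exact ⟨p2.symm y, by simp [← hy]⟩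
  · ext v
    have := SetLike.ext_iff.1 h3 (p2.symm v)
    simp only [LinearMap.mem_ker, LinearMap.mem_range] at this
    simp only [LinearMap.mem_ker, LinearMap.mem_range, LinearMap.comp_apply,
      LinearEquiv.coe_coe, LinearEquiv.map_eq_zero_iff, this]
    constructor
    · rintro ⟨y, hy⟩
      exact ⟨p3 y, by simp [hy]⟩
    · rintro ⟨y, hy⟩
      exact ⟨p3.symm y, by simp [← hy]⟩
  · rw [LinearMap.ker_eq_bot]
    exact p2.injective.comp (hinj.comp p3.symm.injective)
  · intro v; exact h5 _
  · intro v; exact map_mem p1.toLinearMap (h6 _)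
  · intro v; exact map_mem p2.toLinearMap (h7 _)
  · intro a b; simp [h8]
  · intro a; simp [h9]
  · intro a b; simp [hskew (p1.symm a)]
  · intro a z; simp [h10]
  · intro a b c
    simp only [LinearMap.compr₂_apply, LinearMap.compl₁₂_apply, LinearEquiv.coe_coe,
      LinearEquiv.symm_apply_apply]
    congr 1
    apply hinj
    generalize p1.symm a = a
    generalize p1.symm b = b
    generalize p1.symm c = c
    rw [h10, h10, h8, h8, map_sub, map_sub, map_smul, map_smul, map_smul, map_smul,
      hskew c b, hskew c a]
    module
  · intro a b
    exact map_mem p2.toLinearMap (h11 _ _)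
  · intro a b
    simp only [LinearMap.compr₂_apply, LinearMap.compl₁₂_apply, LinearEquiv.coe_coe, hp1, hp2]
    split_ifs with hab
    · have ha : E1.symm a = e1 ⟨a, hab.2⟩ := by
        rw [Equiv.symm_apply_eq]; exact Fin.ext (hE1 ⟨a, hab.2⟩).symm
      have hb : E2.symm b = e2 ⟨a, hab.2⟩ := by
        rw [Equiv.symm_apply_eq]; exact Fin.ext (hab.1.symm.trans (hE2 ⟨a, hab.2⟩).symm)
      rw [ha, hb, ← hp3, ← map_sub]
      exact map_mem p3.toLinearMap (h13 _)
    · rw [sub_zero]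
      refine map_mem p3.toLinearMap (h12 _ _ ?_)
      rintro k ⟨hk1, hk2⟩
      apply hab
      rw [Equiv.eq_symm_apply] at hk1 hk2
      rw [← hk1, ← hk2, hE1, hE2]
      exact ⟨rfl, k.2⟩

end TrimG

namespace TrimG

section ext
variable {R : Type} [CommRing R] {n : ℕ} (p : Fin n → Prop) [DecidablePred p]

/-- extension by zero -/
def extZ : ({i // p i} → R) →ₗ[R] (Fin n → R) where
  toFun a i := if h : p i then a ⟨i, h⟩ else 0
  map_add' a b := by ext i; simp only [Pi.add_apply]; split_ifs <;> simp
  map_smul' c a := by ext i; simp only [Pi.smul_apply]; split_ifs <;> simp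

/-- restriction -/
def res : (Fin n → R) →ₗ[R] ({i // p i} → R) := LinearMap.funLeft R R Subtype.val

lemma res_extZ (a : {i // p i} → R) : res p (extZ p a) = a := by
  ext i; simp [res, extZ, LinearMap.funLeft, i.2]

lemma extZ_single (i : {i // p i}) : extZ p (Pi.single i (1 : R)) = Pi.single i.1 1 := by
  ext j
  by_cases h : p j
  · simp [extZ, h, Pi.single_apply, Subtype.ext_iff]
  · have : j ≠ i.1 := by rintro rfl; exact h i.2
    simp [extZ, h, this]

lemma ext_of_res {v w : Fin n → R} (h1 : res (fun i => p i) v = res (fun i => p i) w)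
    (h2 : res (fun i => ¬ p i) v = res (fun i => ¬ p i) w) : v = w := by
  ext i
  by_cases h : p i
  · exact congrFun h1 ⟨i, h⟩
  · exact congrFun h2 ⟨i, h⟩

lemma res_not_extZ (a : {i // p i} → R) : res (fun i => ¬ p i) (extZ p a) = 0 := by
  ext i; simp [res, extZ, LinearMap.funLeft, i.2]

lemma res_extZ_not (a : {i // ¬ p i} → R) :
    res (fun i => p i) (extZ (fun i => ¬ p i) a) = 0 := by
  ext i; simp [res, extZ, LinearMap.funLeft, i.2]

end ext

end TrimG


theorem trim_quadratic_torclass_G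
    {R : Type} [CommRing R] [IsNoetherianRing R] [IsLocalRing R]
    -- regular local of dimension 3
    (x : Fin 3 → R)
    (hreg : RingTheory.Sequence.IsRegular R [x 0, x 1, x 2])
    (hx : Ideal.span {x 0, x 1, x 2} = maximalIdeal R)
    (I : Ideal R) (r : ℕ)
    (n1 n2 n3 : ℕ) (h3 : 0 < n3) (hr1 : r ≤ n1) (hr2 : r ≤ n2)
    (d1 : (Fin n1 → R) →ₗ[R] R) (d2 : (Fin n2 → R) →ₗ[R] (Fin n1 → R))
    (d3 : (Fin n3 → R) →ₗ[R] (Fin n2 → R))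
    -- minimal free resolution of `R/I`
    (hI : LinearMap.range d1 = I)
    (hex1 : LinearMap.ker d1 = LinearMap.range d2)
    (hex2 : LinearMap.ker d2 = LinearMap.range d3)
    (hex3 : LinearMap.ker d3 = ⊥)
    (hmin1 : ∀ v, d1 v ∈ maximalIdeal R)
    (hmin2 : ∀ v, d2 v ∈ maximalIdeal R • (⊤ : Submodule R (Fin n1 → R)))
    (hmin3 : ∀ v, d3 v ∈ maximalIdeal R • (⊤ : Submodule R (Fin n2 → R)))
    -- DG-algebra structure on `F`
    (m11 : (Fin n1 → R) →ₗ[R] (Fin n1 → R) →ₗ[R] (Fin n2 → R))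
    (m12 : (Fin n1 → R) →ₗ[R] (Fin n2 → R) →ₗ[R] (Fin n3 → R))
    (hleib1 : ∀ a b, d2 (m11 a b) = d1 a • b - d1 b • a)
    (halt : ∀ a, m11 a a = 0) (hskew : ∀ a b, m11 a b = - m11 b a)
    (hleib2 : ∀ a z, d3 (m12 a z) = d1 a • z - m11 a (d2 z))
    (hassoc : ∀ a b c, m12 c (m11 a b) = m12 a (m11 b c))
    -- `F` is in standard form of class `G(r)`
    (htabG1 : ∀ a b : Fin n1, m11 (Pi.single a 1) (Pi.single b 1) ∈
      maximalIdeal R • (⊤ : Submodule R (Fin n2 → R)))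
    (htabG2 : ∀ (a : Fin n1) (b : Fin n2),
      m12 (Pi.single a 1) (Pi.single b 1) -
        (if (a : ℕ) = (b : ℕ) ∧ (a : ℕ) < r then Pi.single (⟨0, h3⟩ : Fin n3) 1 else 0) ∈
      maximalIdeal R • (⊤ : Submodule R (Fin n3 → R)))
    -- `F₁ ·_F F₁ ⊆ 𝔪² F₂`
    (hFF : ∀ a b, m11 a b ∈ (maximalIdeal R ^ 2) • (⊤ : Submodule R (Fin n2 → R)))
    -- `d₂(F₂) ⊆ 𝔪² F₁`
    (hquad : ∀ v, d2 v ∈ (maximalIdeal R ^ 2) • (⊤ : Submodule R (Fin n1 → R)))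
    -- an index set
    (σ : Finset (Fin n1)) :
    HasTorClassG R (trimIdeal R (fun i => d1 (Pi.single i 1)) σ)
      (r - ((σ : Set (Fin n1)) ∩ {i | (i : ℕ) < r}).ncard) := by
  classical
  have hxm := TrimG.x_mem hx
  let ιA := TrimG.extZ (R := R) (fun i : Fin n1 => ¬ i ∈ σ)
  let ιB := TrimG.extZ (R := R) (fun i : Fin n1 => i ∈ σ)
  let ρA := TrimG.res (R := R) (fun i : Fin n1 => ¬ i ∈ σ)
  let ρB := TrimG.res (R := R) (fun i : Fin n1 => i ∈ σ)
  have AA : ∀ a, ρA (ιA a) = a := TrimG.res_extZ _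
  have BB : ∀ a, ρB (ιB a) = a := TrimG.res_extZ _
  have AB : ∀ a, ρA (ιB a) = 0 := TrimG.res_not_extZ (fun i : Fin n1 => i ∈ σ)
  have BA : ∀ a, ρB (ιA a) = 0 := TrimG.res_extZ_not (fun i : Fin n1 => i ∈ σ)
  have ABext : ∀ v w, ρA v = ρA w → ρB v = ρB w → v = w := fun v w h1 h2 =>
    TrimG.ext_of_res (fun i : Fin n1 => i ∈ σ) h2 h1
  have ABsum : ∀ v, v = ιA (ρA v) + ιB (ρB v) := fun v => ABext _ _ (by simp [AA, AB])
    (by simp [BA, BB])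
  let S := {i : Fin n1 // i ∈ σ}
  let C := {i : Fin n1 // ¬ i ∈ σ}
  let k1 := TrimG.dK1 x S
  let k2 := TrimG.dK2 x S
  let k3 := TrimG.dK3 x S
  have hk1 : ∀ u, k1 u ∈ maximalIdeal R • (⊤ : Submodule R (S → R)) := by
    intro u
    rw [TrimG.mem_pi_iff]
    intro s
    exact add_mem (add_mem (Ideal.mul_mem_right _ _ (hxm _)) (Ideal.mul_mem_right _ _ (hxm _)))
      (Ideal.mul_mem_right _ _ (hxm _))
  have hk2 : ∀ u, k2 u ∈ maximalIdeal R • (⊤ : Submodule R (S → Fin 3 → R)) := by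
    intro u
    rw [TrimG.mem_pi2_iff]
    intro s j
    fin_cases j <;> exact sub_mem (Ideal.mul_mem_right _ _ (hxm _)) (Ideal.mul_mem_right _ _ (hxm _))
  have hk3 : ∀ u, k3 u ∈ maximalIdeal R • (⊤ : Submodule R (S → Fin 3 → R)) := by
    intro u
    rw [TrimG.mem_pi2_iff]
    intro s j
    exact Ideal.mul_mem_right _ _ (hxm _)
  have hk12 : ∀ u, k1 (k2 u) = 0 := TrimG.dK1_dK2
  have hk23 : ∀ u, k2 (k3 u) = 0 := TrimG.dK2_dK3
  have sq : maximalIdeal R * maximalIdeal R = maximalIdeal R ^ 2 := (pow_two _).symm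
  have sqle : maximalIdeal R ^ 2 ≤ maximalIdeal R := Ideal.pow_le_self two_ne_zero
  -- the map `q1`
  obtain ⟨q1, hq1, hqqb⟩ := TrimG.exists_lift (Pi.basisFun R (Fin n2)) (ρB ∘ₗ d2) k1
    (fun _ u => u ∈ maximalIdeal R • (⊤ : Submodule R (S → Fin 3 → R))) (by
      intro i
      obtain ⟨u, hu, hu'⟩ := TrimG.dK1_lift (S := S) hx ((ρB ∘ₗ d2) (Pi.basisFun R (Fin n2) i))
        (TrimG.mem_pi_iff.1 (TrimG.map_mem ρB (hquad _)))
      exact ⟨u, hu, TrimG.mem_pi2_iff.2 hu'⟩)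
  replace hq1 : ∀ z, k1 (q1 z) = ρB (d2 z) := hq1
  have hq1m := TrimG.mem_of_basis _ q1 _ hqqb
  -- differentials
  let π : ((C → R) × (S → Fin 3 → R)) →ₗ[R] (Fin n1 → R) := LinearMap.coprod ιA (ιB ∘ₗ k1)
  have hπ : ∀ g, π g = ιA g.1 + ιB (k1 g.2) := fun g => rfl
  let D1 : ((C → R) × (S → Fin 3 → R)) →ₗ[R] R := d1 ∘ₗ π
  have hD1 : ∀ g, D1 g = d1 (π g) := fun g => rfl
  let D2 : ((Fin n2 → R) × (S → Fin 3 → R)) →ₗ[R] ((C → R) × (S → Fin 3 → R)) :=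
    LinearMap.prod (ρA ∘ₗ d2 ∘ₗ LinearMap.fst R _ _) (LinearMap.coprod q1 k2)
  have hD2 : ∀ y, D2 y = (ρA (d2 y.1), q1 y.1 + k2 y.2) := fun y => rfl
  have πD2 : ∀ y, π (D2 y) = d2 y.1 := by
    intro y
    rw [hπ, hD2]
    simp only [map_add, hq1, hk12]
    simpa using (ABsum (d2 y.1)).symm
  have hπinj : ∀ g, π g = 0 → g.1 = 0 ∧ k1 g.2 = 0 := by
    intro g hg
    rw [hπ] at hg
    constructor
    · have := congrArg ρA hg
      simpa [AA, AB] using this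
    · have := congrArg ρB hg
      simpa [BA, BB] using this
  have hdd : ∀ z, d1 (d2 z) = 0 := fun z => by
    have : d2 z ∈ LinearMap.ker d1 := by rw [hex1]; exact ⟨z, rfl⟩
    exact this
  have hdd3 : ∀ z, d2 (d3 z) = 0 := fun z => by
    have : d3 z ∈ LinearMap.ker d2 := by rw [hex2]; exact ⟨z, rfl⟩
    exact this
  have hinj3 : Function.Injective d3 := LinearMap.ker_eq_bot.1 hex3
  -- generators in `𝔪²`
  have hd1sq : ∀ i j : Fin n1, i ≠ j → d1 (Pi.single i 1) ∈ maximalIdeal R ^ 2 := by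
    intro i j hij
    have h := hleib1 (Pi.single i 1) (Pi.single j 1)
    have h2 := TrimG.mem_pi_iff.1 (hquad (m11 (Pi.single i 1) (Pi.single j 1))) j
    rw [h] at h2
    simpa [hij, hij.symm] using h2
  have hA : ∀ (s : S) (a : C → R), d1 (ιA a) ∈ maximalIdeal R ^ 2 := by
    intro s a
    refine TrimG.mem_of_basis (Pi.basisFun R C) (d1 ∘ₗ ιA) (maximalIdeal R ^ 2) ?_ a
    intro i
    have : ιA (Pi.single i 1) = Pi.single i.1 1 := TrimG.extZ_single _ i
    simp only [Pi.basisFun_apply, LinearMap.comp_apply, this]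
    exact hd1sq i.1 s.1 (fun h => i.2 (h ▸ s.2))
  have hD1sq : ∀ (s : S) g, D1 g ∈ maximalIdeal R ^ 2 := by
    intro s g
    rw [hD1, hπ, map_add]
    refine add_mem (hA s _) ?_
    have h1 : ιB (k1 g.2) ∈ maximalIdeal R • (⊤ : Submodule R (Fin n1 → R)) :=
      TrimG.map_mem ιB (hk1 _)
    have h2 := TrimG.map_mem_mul (K := maximalIdeal R) d1 (by simpa using hmin1) h1
    rw [sq] at h2
    simpa using h2
  have hD1smul : ∀ g (u : S → Fin 3 → R), ∀ s j, (D1 g • u) s j ∈ maximalIdeal R ^ 2 := by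
    intro g u s j
    exact Ideal.mul_mem_right _ _ (hD1sq s g)
  -- alternating product, second component
  let c : ((C → R) × (S → Fin 3 → R)) →ₗ[R] ((C → R) × (S → Fin 3 → R)) →ₗ[R] (S → Fin 3 → R) :=
    LinearMap.mk₂ R (fun g g' => D1 g • g'.2 - D1 g' • g.2 - q1 (m11 (π g) (π g')))
      (by intros; simp only [map_add, LinearMap.add_apply, Prod.snd_add]; module)
      (by intros; simp only [map_smul, LinearMap.smul_apply, Prod.smul_snd, smul_eq_mul]; module)
      (by intros; simp only [map_add, LinearMap.add_apply, Prod.snd_add]; module)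
      (by intros; simp only [map_smul, LinearMap.smul_apply, Prod.smul_snd, smul_eq_mul]; module)
  have hc : ∀ g g', c g g' = D1 g • g'.2 - D1 g' • g.2 - q1 (m11 (π g) (π g')) := fun _ _ => rfl
  obtain ⟨v, hvalt, hvc, hvm⟩ := TrimG.exists_lift_alt
    ((Pi.basisFun R C).prod (Pi.basis fun _ : S => Pi.basisFun R (Fin 3))) c
    (by intro g; rw [hc, halt]; simp) k2 (maximalIdeal R • (⊤ : Submodule R (S → Fin 3 → R))) (by
      intro g g'
      have hcyc : k1 (c g g') = 0 := by
        rw [hc, map_sub, hq1, hleib1]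
        simp only [map_sub, map_smul, hD1, hπ, map_add, BA, BB, zero_add]
        abel
      obtain ⟨u, hu⟩ := TrimG.dK1_exact hreg _ hcyc
      refine ⟨u, ?_, hu⟩
      rw [TrimG.mem_pi2_iff]
      refine TrimG.dK2_mem hreg hx u ?_
      intro s j
      rw [hu, hc]
      exact sub_mem (sub_mem (hD1smul _ _ s j) (hD1smul _ _ s j))
        (TrimG.mem_pi2_iff.1 (TrimG.map_mem q1 (hFF _ _)) s j))
  -- the map `q2`
  have hq2m : ∀ q2 : (Fin n3 → R) →ₗ[R] (S → Fin 3 → R), (∀ w, k2 (q2 w) = q1 (d3 w)) →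
      ∀ w, q2 w ∈ maximalIdeal R • (⊤ : Submodule R (S → Fin 3 → R)) := by
    intro q2 h w
    rw [TrimG.mem_pi2_iff]
    refine TrimG.dK2_mem hreg hx _ ?_
    change ∀ s j, k2 (q2 w) s j ∈ _
    rw [h w, ← TrimG.mem_pi2_iff, ← sq]
    exact TrimG.map_mem_mul q1 hq1m (hmin3 w)
  have hq2ex : ∀ w, ∃ u, k2 u = q1 (d3 w) := fun w =>
    TrimG.dK1_exact hreg _ (by
      change k1 _ = 0
      rw [hq1, hdd3, map_zero])
  obtain ⟨q2', hq2', -⟩ := TrimG.exists_lift (Pi.basisFun R (Fin n3)) (q1 ∘ₗ d3) k2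
    (fun _ _ => True) (fun i => (hq2ex _).imp fun u hu => ⟨hu, trivial⟩)
  replace hq2' : ∀ z, k2 (q2' z) = q1 (d3 z) := hq2'
  have hbar : ∀ (a : Fin n1) (h : (a : ℕ) < r),
      m12 (Pi.single a 1) (Pi.single ⟨a, h.trans_le hr2⟩ 1) - Pi.single (⟨0, h3⟩ : Fin n3) 1
        ∈ maximalIdeal R • (⊤ : Submodule R (Fin n3 → R)) := by
    intro a h
    have := htabG2 a ⟨a, h.trans_le hr2⟩
    simpa [h] using this
  have hD2m : ∀ y, D2 y ∈ maximalIdeal R • (⊤ : Submodule R ((C → R) × (S → Fin 3 → R))) := by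
    intro y
    rw [hD2]
    exact TrimG.mem_prod (TrimG.map_mem ρA (hmin2 _)) (add_mem (hq1m _) (hk2 _))
  have hvD2 : ∀ g y, v g (D2 y) ∈ (maximalIdeal R ^ 2) • (⊤ : Submodule R (S → Fin 3 → R)) := by
    intro g y
    rw [← sq]
    exact TrimG.map_mem_mul (v g) (hvm g) (hD2m y)
  obtain ⟨q2, hq2, hq20⟩ := TrimG.exists_lift (Pi.basisFun R (Fin n3)) (q1 ∘ₗ d3) k2
    (fun i u => i = ⟨0, h3⟩ → (∃ a : Fin n1, (a : ℕ) < r ∧ ¬ a ∈ σ) →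
      u ∈ (maximalIdeal R ^ 2) • (⊤ : Submodule R (S → Fin 3 → R))) (by
      intro i
      by_cases hi : i = ⟨0, h3⟩ ∧ (∃ a : Fin n1, (a : ℕ) < r ∧ ¬ a ∈ σ)
      · obtain ⟨rfl, a, har, haσ⟩ := hi
        have h0 := hbar a har
        set z : Fin n2 → R := Pi.single ⟨a, har.trans_le hr2⟩ 1 with hz
        set w := m12 (Pi.single a 1) z with hw
        let g : (C → R) × (S → Fin 3 → R) := (Pi.single ⟨a, haσ⟩ 1, 0)
        have hπg : π g = Pi.single a 1 := by
          rw [hπ]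
          simp only [g, map_zero, add_zero]
          exact TrimG.extZ_single _ _
        have hv1 : k2 (v g (D2 (z, 0))) = q1 (d3 w) := by
          rw [hvc, hc, hD1 (D2 _), πD2, hdd, hw, hleib2, hD1, hπg, hD2]
          simp
        refine ⟨v g (D2 (z, 0)) - q2' (w - Pi.single ⟨0, h3⟩ 1), ?_, fun _ _ => ?_⟩
        · rw [map_sub, hq2', hv1]
          simp
        · refine sub_mem (hvD2 _ _) ?_
          rw [← sq]
          exact TrimG.map_mem_mul q2' (hq2m q2' hq2') h0
      · obtain ⟨u, hu⟩ := hq2ex (Pi.basisFun R (Fin n3) i)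
        exact ⟨u, hu, fun h1 h2 => absurd ⟨h1, h2⟩ hi⟩)
  replace hq2 : ∀ z, k2 (q2 z) = q1 (d3 z) := hq2
  replace hq2m := hq2m q2 hq2
  let D3 : ((Fin n3 → R) × (S → R)) →ₗ[R] ((Fin n2 → R) × (S → Fin 3 → R)) :=
    LinearMap.prod (d3 ∘ₗ LinearMap.fst R _ _) (LinearMap.coprod (-q2) k3)
  have hD3 : ∀ y, D3 y = (d3 y.1, - q2 y.1 + k3 y.2) := fun y => rfl
  have e1 : LinearMap.ker D1 = LinearMap.range D2 := by
    ext g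
    rw [LinearMap.mem_ker, LinearMap.mem_range]
    constructor
    · intro h
      have : π g ∈ LinearMap.ker d1 := h
      rw [hex1] at this
      obtain ⟨z, hz⟩ := this
      obtain ⟨h1, h2⟩ := hπinj (g - D2 (z, 0)) (by rw [map_sub, πD2, hz, sub_self])
      obtain ⟨u, hu⟩ := TrimG.dK1_exact hreg _ h2
      refine ⟨(z, u), ?_⟩
      have hu' : k2 u = g.2 - q1 z := by
        change k2 u = _ at hu
        rw [hu, hD2]; simp
      have h1' : ρA (d2 z) = g.1 := by
        rw [Prod.fst_sub, hD2, sub_eq_zero] at h1; exact h1.symm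
      rw [hD2]
      ext1
      · exact h1'
      · simp [hu']
    · rintro ⟨y, rfl⟩
      rw [hD1, πD2, hdd]
  have e2 : LinearMap.ker D2 = LinearMap.range D3 := by
    ext y
    rw [LinearMap.mem_ker, LinearMap.mem_range]
    constructor
    · intro h
      have h1 : y.1 ∈ LinearMap.ker d2 := by
        rw [LinearMap.mem_ker, ← πD2, h, map_zero]
      rw [hex2] at h1
      obtain ⟨w, hw⟩ := h1
      rw [hD2] at h
      have h2 : q1 y.1 + k2 y.2 = 0 := congrArg Prod.snd h
      obtain ⟨t, ht⟩ := TrimG.dK2_exact hreg (y.2 + q2 w) (by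
        change k2 _ = 0
        rw [map_add, hq2, hw, add_comm, h2])
      change k3 t = _ at ht
      refine ⟨(w, t), ?_⟩
      rw [hD3]
      ext1
      · exact hw
      · simp [ht]
    · rintro ⟨w, rfl⟩
      rw [hD3, hD2]
      simp [hdd3, hq2, hk23]
  have e3 : LinearMap.ker D3 = ⊥ := by
    rw [LinearMap.ker_eq_bot']
    intro y h
    rw [hD3] at h
    have h1 : d3 y.1 = 0 := congrArg Prod.fst h
    have h2 : - q2 y.1 + k3 y.2 = 0 := congrArg Prod.snd h
    have h1' : y.1 = 0 := hinj3 (by rw [h1, map_zero])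
    rw [h1', map_zero, neg_zero, zero_add] at h2
    exact Prod.ext h1' (TrimG.dK3_inj hreg _ h2)
  let M11 : ((C → R) × (S → Fin 3 → R)) →ₗ[R] ((C → R) × (S → Fin 3 → R)) →ₗ[R]
      ((Fin n2 → R) × (S → Fin 3 → R)) :=
    LinearMap.mk₂ R (fun g g' => (m11 (π g) (π g'), v g g'))
      (by intros; simp) (by intros; simp) (by intros; simp) (by intros; simp)
  have hM11 : ∀ g g', M11 g g' = (m11 (π g) (π g'), v g g') := fun _ _ => rfl
  have l1 : ∀ a b, D2 (M11 a b) = D1 a • b - D1 b • a := by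
    intro a b
    rw [hM11, hD2, hvc, hc, hleib1]
    ext1
    · simp [hD1, hπ, AA, AB]
    · simp
  let f : ((C → R) × (S → Fin 3 → R)) →ₗ[R] ((Fin n2 → R) × (S → Fin 3 → R)) →ₗ[R]
      ((Fin n2 → R) × (S → Fin 3 → R)) :=
    LinearMap.mk₂ R (fun g y => D1 g • y - M11 g (D2 y))
      (by intros; simp only [map_add, LinearMap.add_apply]; module)
      (by intros; simp only [map_smul, LinearMap.smul_apply, smul_eq_mul]; module)
      (by intros; simp only [map_add]; module)
      (by intros; simp only [map_smul]; module)
  let b1 := (Pi.basisFun R C).prod (Pi.basis fun _ : S => Pi.basisFun R (Fin 3))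
  let b2 := (Pi.basisFun R (Fin n2)).prod (Pi.basis fun _ : S => Pi.basisFun R (Fin 3))
  let b3 := (Pi.basisFun R (Fin n3)).prod (Pi.basisFun R S)
  obtain ⟨M12, hM12⟩ := TrimG.exists_lift2 b1 b2 f D3 (by
    intro i j
    have : f (b1 i) (b2 j) ∈ LinearMap.ker D2 := by
      rw [LinearMap.mem_ker]
      change D2 (D1 _ • _ - M11 _ (D2 _)) = 0
      have h0 : D1 (D2 (b2 j)) = 0 := by rw [hD1, πD2, hdd]
      rw [map_sub, l1, map_smul, h0]
      simp
    rw [e2] at this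
    exact this)
  replace hM12 : ∀ g y, D3 (M12 g y) = D1 g • y - M11 g (D2 y) := hM12
  have hfst : ∀ g y, (M12 g y).1 = m12 (π g) y.1 := by
    intro g y
    apply hinj3
    have := congrArg Prod.fst (hM12 g y)
    rw [hD3] at this
    rw [hleib2, ← πD2]
    exact this
  have hsnd : ∀ g y, q2 (m12 (π g) y.1) ∈ (maximalIdeal R ^ 2) • (⊤ : Submodule R (S → Fin 3 → R)) →
      (M12 g y).2 ∈ maximalIdeal R • (⊤ : Submodule R (S → R)) := by
    intro g y h
    rw [TrimG.mem_pi_iff]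
    refine TrimG.dK3_mem hreg hx _ ?_
    have h2 : - q2 (M12 g y).1 + k3 (M12 g y).2 = D1 g • y.2 - v g (D2 y) :=
      congrArg Prod.snd (hM12 g y)
    change ∀ s j, k3 (M12 g y).2 s j ∈ _
    have h3 : k3 (M12 g y).2 = D1 g • y.2 - v g (D2 y) + q2 (m12 (π g) y.1) := by
      rw [← h2, hfst]; abel
    rw [h3, ← TrimG.mem_pi2_iff]
    exact add_mem (sub_mem (TrimG.mem_pi2_iff.2 (hD1smul _ _)) (hvD2 _ _)) h
  have htriv : ∀ g y, m12 (π g) y.1 ∈ maximalIdeal R • (⊤ : Submodule R (Fin n3 → R)) →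
      M12 g y ∈ maximalIdeal R • (⊤ : Submodule R ((Fin n3 → R) × (S → R))) := by
    intro g y h
    refine TrimG.mem_prod (by rw [hfst]; exact h) (hsnd g y ?_)
    rw [← sq]
    exact TrimG.map_mem_mul q2 hq2m h
  have hιA : ∀ i : C, ιA (Pi.single i 1) = Pi.single i.1 1 := TrimG.extZ_single _
  have hιB : ∀ i : S, ιB (Pi.single i 1) = Pi.single i.1 1 := TrimG.extZ_single _
  have hb1 : ∀ i : C, π (b1 (Sum.inl i)) = Pi.single i.1 1 := by
    intro i
    have h1 : (b1 (Sum.inl i)).1 = Pi.single i 1 := by simp [b1]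
    have h2 : (b1 (Sum.inl i)).2 = 0 := by simp [b1]
    rw [hπ, h1, h2, map_zero, map_zero, add_zero, hιA]
  have hb2 : ∀ j, (b2 (Sum.inl j)).1 = Pi.single j 1 := by
    intro j; simp [b2]
  -- the index embedding
  let T := {i : Fin n1 // (i : ℕ) < r ∧ ¬ i ∈ σ}
  have hT : Fintype.card T = r - ((σ : Set (Fin n1)) ∩ {i | (i : ℕ) < r}).ncard := by
    have h1 : Fintype.card T + ((σ : Set (Fin n1)) ∩ {i | (i : ℕ) < r}).ncard = r := by
      have e1 : Fintype.card T = (Finset.univ.filter fun i : Fin n1 => (i : ℕ) < r ∧ ¬ i ∈ σ).card :=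
        Fintype.card_subtype _
      have e2 : ((σ : Set (Fin n1)) ∩ {i | (i : ℕ) < r}) =
          ((Finset.univ.filter fun i : Fin n1 => (i : ℕ) < r ∧ i ∈ σ : Finset (Fin n1)) :
            Set (Fin n1)) := by
        ext i; simp [and_comm]
      have e3 : (Finset.univ.filter fun i : Fin n1 => (i : ℕ) < r).card = r := by
        rw [Fin.card_filter_val_lt, min_eq_right hr1]
      rw [e1, e2, Set.ncard_coe_finset, ← Finset.filter_filter, ← Finset.filter_filter, add_comm,
        Finset.card_filter_add_card_filter_not, e3]
    omega
  rw [← hT]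
  let eT : Fin (Fintype.card T) ≃ T := (Fintype.equivFin T).symm
  refine TrimG.transport _ _ b1 b2 b3 (Sum.inl ⟨0, h3⟩)
    ⟨fun k => Sum.inl ⟨(eT k).1, (eT k).2.2⟩, ?_⟩
    ⟨fun k => Sum.inl ⟨(eT k).1, (eT k).2.1.trans_le hr2⟩, ?_⟩
    D1 D2 D3 M11 M12 ?_ e1 e2 e3 (fun v => hmin1 _) hD2m ?_ l1 ?_ hM12 ?_ ?_ ?_
  · intro k l h
    have h' := congrArg Subtype.val (Sum.inl_injective h)
    exact eT.injective (Subtype.ext h')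
  · intro k l h
    have h' := congrArg Fin.val (Sum.inl_injective h)
    exact eT.injective (Subtype.ext (Fin.ext h'))
  · apply le_antisymm
    · rintro _ ⟨g, rfl⟩
      rw [hD1, hπ, map_add]
      refine Submodule.add_mem_sup ?_ ?_
      · refine TrimG.mem_of_basis (Pi.basisFun R C) (d1 ∘ₗ ιA) _ ?_ g.1
        intro i
        simp only [Pi.basisFun_apply, LinearMap.comp_apply, hιA]
        exact Ideal.subset_span ⟨i.1, i.2, rfl⟩
      · have h := Submodule.mem_map_of_mem (f := d1 ∘ₗ ιB) (hk1 g.2)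
        rw [Submodule.map_smul''] at h
        refine Submodule.smul_mono le_rfl ?_ h
        rintro _ ⟨b, -, rfl⟩
        refine TrimG.mem_of_basis (Pi.basisFun R S) (d1 ∘ₗ ιB) _ ?_ b
        intro i
        simp only [Pi.basisFun_apply, LinearMap.comp_apply, hιB]
        exact Ideal.subset_span ⟨i.1, i.2, rfl⟩
    · refine sup_le ?_ ?_
      · refine Ideal.span_le.2 ?_
        rintro _ ⟨i, hi, rfl⟩
        refine ⟨(Pi.single ⟨i, hi⟩ 1, 0), ?_⟩
        rw [hD1, hπ]
        simp [hιA]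
      · rw [← hx, Ideal.span_mul_span', Ideal.span_le]
        have key : ∀ (j : Fin 3) (i : Fin n1), i ∈ σ → x j * d1 (Pi.single i 1) ∈ LinearMap.range D1 := by
          intro j i hi
          refine ⟨(0, Pi.single ⟨i, hi⟩ (Pi.single j 1)), ?_⟩
          have : k1 (Pi.single ⟨i, hi⟩ (Pi.single j 1)) = x j • Pi.single ⟨i, hi⟩ 1 := by
            ext s
            by_cases hs : s = ⟨i, hi⟩
            · subst hs
              fin_cases j <;> simp [k1, TrimG.dK1]
            · simp [k1, TrimG.dK1, hs]
          rw [hD1, hπ]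
          simp [this, hιB]
        rintro _ ⟨a, ha, _, ⟨i, hi, rfl⟩, rfl⟩
        rcases ha with rfl | rfl | rfl
        · exact key 0 i hi
        · exact key 1 i hi
        · exact key 2 i hi
  · intro y
    rw [hD3]
    exact TrimG.mem_prod (hmin3 _) (add_mem (neg_mem (hq2m _)) (hk3 _))
  · intro a
    rw [hM11, halt, hvalt]; rfl
  · intro a b
    rw [hM11]
    exact TrimG.mem_prod (Submodule.smul_mono sqle le_rfl (hFF _ _)) (hvm _ _)
  · intro i j hij
    apply htriv
    rcases i with i | i
    · rcases j with j | j
      · rw [hb1, hb2]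
        have h := htabG2 i.1 j
        rwa [if_neg, sub_zero] at h
        rintro ⟨h1, h2⟩
        apply hij (eT.symm ⟨i.1, h2, i.2⟩)
        constructor
        · exact congrArg Sum.inl (Subtype.ext (congrArg (fun t : T => t.1) (eT.apply_symm_apply _)))
        · exact congrArg Sum.inl (Fin.ext
            ((congrArg (fun t : T => (t.1 : ℕ)) (eT.apply_symm_apply _)).trans h1))
      · have : (b2 (Sum.inr j)).1 = 0 := by simp [b2]
        rw [this, map_zero]
        exact zero_mem _
    · have : π (b1 (Sum.inr i)) ∈ maximalIdeal R • (⊤ : Submodule R (Fin n1 → R)) := by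
        have h0 : (b1 (Sum.inr i)).1 = 0 := by simp [b1]
        rw [hπ, h0, map_zero, zero_add]
        exact TrimG.map_mem ιB (hk1 _)
      exact TrimG.map_mem (m12.flip (b2 j).1) this
  · intro k
    obtain ⟨h1, h2⟩ := (eT k).2
    have hb := hbar (eT k).1 h1
    have hb1' := hb1 ⟨(eT k).1, h2⟩
    have hb2' := hb2 ⟨(eT k).1, h1.trans_le hr2⟩
    have hb3 : b3 (Sum.inl ⟨0, h3⟩) = (Pi.single ⟨0, h3⟩ 1, 0) := by
      ext1 <;> simp [b3]
    change M12 (b1 (Sum.inl ⟨(eT k).1, h2⟩)) (b2 (Sum.inl ⟨(eT k).1, h1.trans_le hr2⟩)) - b3 _ ∈ _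
    rw [hb3]
    refine TrimG.mem_prod ?_ ?_
    · rw [Prod.fst_sub, hfst, hb1', hb2']
      exact hb
    · rw [Prod.snd_sub, sub_zero]
      apply hsnd
      rw [hb1', hb2']
      have h5 := hq20 ⟨0, h3⟩ rfl ⟨_, h1, h2⟩
      rw [Pi.basisFun_apply] at h5
      have h6 := TrimG.map_mem_mul q2 hq2m hb
      rw [sq] at h6
      have h7 := add_mem h6 h5
      rwa [← map_add, sub_add_cancel] at h7
end
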